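/- arXiv:1309.0725 — 4 statements merged into one kernel-verified Lean document; each statement's English description precedes it below -/
import Mathlib

section
/- Let P_7 = conv((C_6 × {0}) ∪ (C_6^⋆ × {-1,1})) ⊂ ℝ^7, where C_6 = [-1,1]^6 and C_6^⋆ = conv{±e_1, …, ±e_6}. Then P_7 is a centrally symmetric lattice polytope whose only interior lattice point is the origin, and its linear Ehrhart coefficient equals ℓ_1(P_7) = 1534/105 > 14 = ℓ_1(C_7). Hence P_7 is a counterexample to Wills' conjecture in dimension 7. -/
open MeasureTheory Polynomial Pointwise

/-- The number of integer lattice points contained in a subset of `ℝ^n`. -/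
noncomputable def latticePointCount {n : ℕ} (S : Set (Fin n → ℝ)) : ℕ :=
  {v : Fin n → ℤ | (fun i => (v i : ℝ)) ∈ S}.ncard

/-- A lattice polytope in `ℝ^n`: the convex hull of finitely many integer points. -/
def IsLatticePolytope {n : ℕ} (P : Set (Fin n → ℝ)) : Prop :=
  ∃ V : Finset (Fin n → ℤ),
    P = convexHull ℝ ((fun v : Fin n → ℤ => fun i => (v i : ℝ)) '' (V : Set (Fin n → ℤ)))

/-- `L` is the Ehrhart polynomial of `P`: for every positive integer `k` its value at `k`
is the number of lattice points of the dilate `kP`. -/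
def IsEhrhartPoly {n : ℕ} (P : Set (Fin n → ℝ)) (L : Polynomial ℝ) : Prop :=
  ∀ k : ℕ, 0 < k → L.eval (k : ℝ) = latticePointCount ((k : ℝ) • P)

/-- The standard crosspolytope `C_6^⋆ = conv{±e_1, …, ±e_6}` in `ℝ^6`. -/
def crossPolytope6 : Set (Fin 6 → ℝ) :=
  convexHull ℝ {y : Fin 6 → ℝ | ∃ i : Fin 6, y = Pi.single i 1 ∨ y = -Pi.single i 1}

/-- `P_7 = conv((C_6 × {0}) ∪ (C_6^⋆ × {-1,1})) ⊂ ℝ^7`. -/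
def polytopeP7 : Set (Fin 7 → ℝ) :=
  convexHull ℝ
    ({x : Fin 7 → ℝ | (∀ i, |x i| ≤ 1) ∧ x 6 = 0} ∪
     {x : Fin 7 → ℝ | (fun i : Fin 6 => x i.castSucc) ∈ crossPolytope6 ∧
        (x 6 = 1 ∨ x 6 = -1)})

/-!
The slice of `k • P` at height `h` is the Minkowski sum `(k - |h|) C_n + |h| C_n^⋆` of a cube and a
crosspolytope, because the cube contains the crosspolytope. Moving each coordinate as far as the
cube allows, `v` lies in `a C_n + b C_n^⋆` exactly when `∑ i, max (|v i| - a) 0 ≤ b`.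

Let `Σ` be the operator taking `f` to its partial sums `b ↦ f 0 + ⋯ + f (b - 1)`. Adding one
coordinate applies `2 a + 1 + 2 Σ` to the number of such integer points as a function of `b`, and
`Σ ^ m` takes `1` to `b.choose m`, so the binomial theorem gives the count
`∑ m, n.choose m * 2 ^ m * b.choose m * (2 a + 1) ^ (n - m)`.

To sum over the slices `b + a = k`, expand `(2 a + 1) ^ (n - m)` in the Newton basis `a.choose j`:
the convolution of `b.choose m` with `a.choose j` is `(k + 1).choose (m + j + 1)`, a polynomial in
`k` whose linear coefficient is `1` for `m + j = 0` and `(-1) ^ (r + 1) / (r (r + 1))` for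
`m + j = r > 0`. The heights `± h` are both counted, so height `0` is subtracted once.
-/

section CayleyBipyramid

variable {E : Type*} [AddCommGroup E] [Module ℝ E] {A B : Set E}

/-- The convex hull of `A × {0}` and `B × {-1, 1}`. For `B = {0}` this is the bipyramid over `A`;
`P_7` is the case where `A` is a cube and `B` a crosspolytope. -/
def cayleyBipyramid (A B : Set E) : Set (E × ℝ) :=
  convexHull ℝ (A ×ˢ {0} ∪ B ×ˢ {-1, 1})

theorem convex_cayleyBipyramid (A B : Set E) : Convex ℝ (cayleyBipyramid A B) :=
  convex_convexHull ℝ _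

theorem cayleyBipyramid_convexHull (A B : Set E) :
    cayleyBipyramid (convexHull ℝ A) (convexHull ℝ B) = cayleyBipyramid A B := by
  have hull_prod (S : Set E) (T : Set ℝ) :
      convexHull ℝ (convexHull ℝ S ×ˢ T) = convexHull ℝ (S ×ˢ T) := by
    rw [convexHull_prod, convexHull_prod, (convexHull ℝ).idempotent]
  rw [cayleyBipyramid, cayleyBipyramid, ← convexHull_convexHull_union_left,
    ← convexHull_convexHull_union_right, hull_prod, hull_prod, convexHull_convexHull_union_left,
    convexHull_convexHull_union_right]

theorem smul_add_smul_subset_of_le (hA : Convex ℝ A) (hB : Convex ℝ B) (hBA : B ⊆ A) {u w : ℝ}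
    (hu : 0 ≤ u) (huw : u ≤ w) (hw : w ≤ 1) :
    (1 - w) • A + w • B ⊆ (1 - u) • A + u • B := by
  calc (1 - w) • A + w • B
      = (1 - w) • A + ((w - u) • B + u • B) := by
        rw [← hB.add_smul (sub_nonneg.2 huw) hu, sub_add_cancel]
    _ ⊆ (1 - w) • A + ((w - u) • A + u • B) := by gcongr
    _ = (1 - u) • A + u • B := by
        rw [← add_assoc, ← hA.add_smul (sub_nonneg.2 hw) (sub_nonneg.2 huw), sub_add_sub_cancel]

theorem convex_setOf_mem_smul_add_smul (hA : Convex ℝ A) (hB : Convex ℝ B) (hBA : B ⊆ A) :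
    Convex ℝ {p : E × ℝ | |p.2| ≤ 1 ∧ p.1 ∈ (1 - |p.2|) • A + |p.2| • B} := by
  rintro ⟨x, g⟩ ⟨hg, hx⟩ ⟨y, h⟩ ⟨hh, hy⟩ s t hs ht hst
  dsimp only at hg hx hh hy
  have height_le : |s * g + t * h| ≤ s * |g| + t * |h| := by
    simpa only [abs_mul, abs_of_nonneg hs, abs_of_nonneg ht] using abs_add_le (s * g) (t * h)
  have le_one : s * |g| + t * |h| ≤ 1 := by nlinarith
  refine ⟨height_le.trans le_one,
    smul_add_smul_subset_of_le hA hB hBA (abs_nonneg _) height_le le_one ?_⟩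
  have hA_split : (1 - (s * |g| + t * |h|)) • A = (s * (1 - |g|)) • A + (t * (1 - |h|)) • A := by
    rw [← hA.add_smul (mul_nonneg hs (sub_nonneg.2 hg)) (mul_nonneg ht (sub_nonneg.2 hh))]
    congr 1
    linear_combination -hst
  rw [hA_split, hB.add_smul (by positivity) (by positivity), add_add_add_comm]
  simp only [mul_smul, ← smul_add]
  exact Set.add_mem_add (Set.smul_mem_smul_set hx) (Set.smul_mem_smul_set hy)

theorem mem_cayleyBipyramid_iff (hA : Convex ℝ A) (hB : Convex ℝ B) (hBA : B ⊆ A)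
    (hne : B.Nonempty) {p : E × ℝ} :
    p ∈ cayleyBipyramid A B ↔ |p.2| ≤ 1 ∧ p.1 ∈ (1 - |p.2|) • A + |p.2| • B := by
  constructor
  · refine fun hp ↦ convexHull_min ?_ (convex_setOf_mem_smul_add_smul hA hB hBA) hp
    rintro ⟨y, h⟩ (⟨hy, rfl⟩ | ⟨hy, rfl | rfl⟩)
    · simpa [Set.zero_smul_set hne] using hy
    · simpa [Set.zero_smul_set (hne.mono hBA)] using hy
    · simpa [Set.zero_smul_set (hne.mono hBA)] using hy
  · obtain ⟨y, h⟩ := p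
    rintro ⟨hh, _, ⟨a, ha, rfl⟩, _, ⟨b, hb, rfl⟩, hy⟩
    obtain rfl : (1 - |h|) • a + |h| • b = y := hy
    obtain ⟨ε, hε, hε_mul⟩ : ∃ ε ∈ ({-1, 1} : Set ℝ), |h| * ε = h := by
      rcases abs_choice h with habs | habs
      · exact ⟨1, by simp, by rw [mul_one, habs]⟩
      · exact ⟨-1, by simp, by rw [mul_neg_one, habs, neg_neg]⟩
    have hbase : (a, (0 : ℝ)) ∈ cayleyBipyramid A B :=
      subset_convexHull _ _ (Or.inl ⟨ha, rfl⟩)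
    have hcap : (b, ε) ∈ cayleyBipyramid A B := subset_convexHull _ _ (Or.inr ⟨hb, hε⟩)
    have hcomb := convex_cayleyBipyramid A B hbase hcap (sub_nonneg.2 hh) (abs_nonneg h)
      (sub_add_cancel 1 |h|)
    simpa [hε_mul] using hcomb

theorem mem_smul_cayleyBipyramid_iff (hA : Convex ℝ A) (hB : Convex ℝ B) (hBA : B ⊆ A)
    (hne : B.Nonempty) {r : ℝ} (hr : 0 < r) {p : E × ℝ} :
    p ∈ r • cayleyBipyramid A B ↔ |p.2| ≤ r ∧ p.1 ∈ (r - |p.2|) • A + |p.2| • B := by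
  have height : r * |r⁻¹ * p.2| = |p.2| := by
    rw [abs_mul, abs_of_pos (inv_pos.2 hr), mul_inv_cancel_left₀ hr.ne']
  rw [Set.mem_smul_set_iff_inv_smul_mem₀ hr.ne', mem_cayleyBipyramid_iff hA hB hBA hne,
    Prod.smul_fst, Prod.smul_snd, smul_eq_mul, ← Set.mem_smul_set_iff_inv_smul_mem₀ hr.ne',
    smul_add, smul_smul, smul_smul, mul_sub, mul_one, height, ← mul_le_mul_iff_right₀ hr, height,
    mul_one]

end CayleyBipyramid

section CrossPolytope

/-- The standard crosspolytope in `ℝ^ι`, the convex hull of `±e_i`; `crossPolytope6` is the case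
`ι = Fin 6`. -/
def crossPolytope (ι : Type*) [DecidableEq ι] : Set (ι → ℝ) :=
  convexHull ℝ {y | ∃ i, y = Pi.single i 1 ∨ y = -Pi.single i 1}

variable {ι : Type*}

theorem convex_crossPolytope [DecidableEq ι] : Convex ℝ (crossPolytope ι) :=
  convex_convexHull ℝ _

theorem single_mem_crossPolytope [DecidableEq ι] (i : ι) : Pi.single i 1 ∈ crossPolytope ι :=
  subset_convexHull ℝ _ ⟨i, Or.inl rfl⟩

theorem neg_single_mem_crossPolytope [DecidableEq ι] (i : ι) :
    -Pi.single i 1 ∈ crossPolytope ι :=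
  subset_convexHull ℝ _ ⟨i, Or.inr rfl⟩

theorem zero_mem_crossPolytope [DecidableEq ι] [Nonempty ι] : 0 ∈ crossPolytope ι := by
  obtain ⟨i⟩ := ‹Nonempty ι›
  simpa using convex_crossPolytope.midpoint_mem (single_mem_crossPolytope i)
    (neg_single_mem_crossPolytope i)

variable [Fintype ι]

theorem mem_smul_closedBall_pi_iff {a : ℝ} (ha : 0 ≤ a) {y : ι → ℝ} :
    y ∈ a • Metric.closedBall (0 : ι → ℝ) 1 ↔ ∀ i, |y i| ≤ a := by
  rw [smul_unitClosedBall_of_nonneg ha, mem_closedBall_zero_iff, pi_norm_le_iff_of_nonneg ha]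
  rfl

variable [DecidableEq ι]

theorem sum_abs_le_one_of_mem_crossPolytope {y : ι → ℝ} (hy : y ∈ crossPolytope ι) :
    ∑ i, |y i| ≤ 1 := by
  have hconvex : Convex ℝ {y : ι → ℝ | ∑ i, |y i| ≤ 1} := by
    intro x hx y hy a b ha hb hab
    simp only [Set.mem_ofPred_eq] at hx hy ⊢
    calc ∑ i, |(a • x + b • y) i| ≤ ∑ i, (a * |x i| + b * |y i|) := by
          refine Finset.sum_le_sum fun i _ ↦ ?_
          simpa [abs_mul, abs_of_nonneg ha, abs_of_nonneg hb] using abs_add_le (a * x i) (b * y i)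
      _ = a * ∑ i, |x i| + b * ∑ i, |y i| := by
          rw [Finset.mul_sum, Finset.mul_sum, ← Finset.sum_add_distrib]
      _ ≤ 1 := by nlinarith
  refine convexHull_min ?_ hconvex hy
  rintro _ ⟨i, rfl | rfl⟩ <;> simp [Pi.single_apply, apply_ite abs]

theorem crossPolytope_subset_closedBall :
    crossPolytope ι ⊆ Metric.closedBall (0 : ι → ℝ) 1 := by
  intro y hy
  rw [mem_closedBall_zero_iff, pi_norm_le_iff_of_nonneg zero_le_one]
  exact fun i ↦ (Finset.single_le_sum (fun j _ ↦ abs_nonneg (y j)) (Finset.mem_univ i)).trans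
    (sum_abs_le_one_of_mem_crossPolytope hy)

variable [Nonempty ι]

theorem mem_sum_abs_smul_crossPolytope (y : ι → ℝ) : y ∈ (∑ i, |y i|) • crossPolytope ι := by
  have hsign : ∀ i, ∃ z ∈ crossPolytope ι, |y i| • z = Pi.single i (y i) := by
    intro i
    rcases abs_choice (y i) with habs | habs
    · refine ⟨_, single_mem_crossPolytope i, ?_⟩
      rw [habs, ← Pi.single_smul, smul_eq_mul, mul_one]
    · refine ⟨_, neg_single_mem_crossPolytope i, ?_⟩
      rw [habs, neg_smul_neg, ← Pi.single_smul, smul_eq_mul, mul_one]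
  choose z hz hyz using hsign
  have hnonneg : ∀ i ∈ Finset.univ, 0 ≤ |y i| := fun i _ ↦ abs_nonneg (y i)
  rcases (Finset.sum_nonneg hnonneg).eq_or_lt with hsum | hsum
  · have hy : y = 0 := funext fun i ↦
      abs_eq_zero.1 ((Finset.sum_eq_zero_iff_of_nonneg hnonneg).1 hsum.symm i (Finset.mem_univ i))
    rw [← hsum, hy]
    exact ⟨0, zero_mem_crossPolytope, smul_zero 0⟩
  · rw [Set.mem_smul_set_iff_inv_smul_mem₀ hsum.ne']
    simpa only [Finset.centerMass, hyz, Finset.univ_sum_single] using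
      convex_crossPolytope.centerMass_mem hnonneg hsum fun i _ ↦ hz i

theorem mem_smul_crossPolytope_iff {b : ℝ} (hb : 0 ≤ b) {y : ι → ℝ} :
    y ∈ b • crossPolytope ι ↔ ∑ i, |y i| ≤ b := by
  constructor
  · rintro ⟨z, hz, rfl⟩
    simpa [abs_mul, abs_of_nonneg hb, ← Finset.mul_sum] using
      mul_le_mul_of_nonneg_left (sum_abs_le_one_of_mem_crossPolytope hz) hb
  · intro hy
    have hnorm : 0 ≤ ∑ i, |y i| := Finset.sum_nonneg fun i _ ↦ abs_nonneg (y i)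
    rw [← add_sub_cancel (∑ i, |y i|) b, convex_crossPolytope.add_smul hnorm (sub_nonneg.2 hy)]
    exact ⟨y, mem_sum_abs_smul_crossPolytope y, 0, ⟨0, zero_mem_crossPolytope, smul_zero _⟩,
      add_zero y⟩

theorem exists_abs_le_and_abs_sub_eq_max {a : ℝ} (ha : 0 ≤ a) (t : ℝ) :
    ∃ c, |c| ≤ a ∧ |t - c| = max (|t| - a) 0 := by
  refine ⟨max (-a) (min a t), ?_, ?_⟩ <;> grind

theorem mem_smul_closedBall_add_smul_crossPolytope_iff {a b : ℝ} (ha : 0 ≤ a) (hb : 0 ≤ b)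
    {y : ι → ℝ} :
    y ∈ a • Metric.closedBall (0 : ι → ℝ) 1 + b • crossPolytope ι ↔
      ∑ i, max (|y i| - a) 0 ≤ b := by
  constructor
  · rintro ⟨c, hc, z, hz, rfl⟩
    rw [mem_smul_closedBall_pi_iff ha] at hc
    rw [mem_smul_crossPolytope_iff hb] at hz
    refine (Finset.sum_le_sum fun i _ ↦ max_le ?_ (abs_nonneg (z i))).trans hz
    calc |c i + z i| - a ≤ |c i| + |z i| - a := by gcongr; exact abs_add_le _ _
      _ ≤ |z i| := by linarith [hc i]
  · intro hy
    choose c hc hyc using fun i ↦ exists_abs_le_and_abs_sub_eq_max ha (y i)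
    refine ⟨c, (mem_smul_closedBall_pi_iff ha).2 hc, y - c, ?_, add_sub_cancel c y⟩
    simpa only [mem_smul_crossPolytope_iff hb, Pi.sub_apply, hyc] using hy

end CrossPolytope

section CubeCross

variable {n : ℕ}

/-- The identification of `ℝ^(n+1)` with `ℝ^n × ℝ` splitting off the last coordinate, the height. -/
def initLastEquiv (n : ℕ) : (Fin (n + 1) → ℝ) ≃ₗ[ℝ] (Fin n → ℝ) × ℝ where
  toFun x := (Fin.init x, x (Fin.last n))
  invFun p := Fin.snoc p.1 p.2
  left_inv x := Fin.snoc_init_self x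
  right_inv p := by simp
  map_add' _ _ := rfl
  map_smul' _ _ := rfl

/-- The polytope `P_{n+1} = conv((C_n × {0}) ∪ (C_n^⋆ × {-1, 1}))` in `ℝ^(n+1)`, the cube `C_n`
being encoded as the closed unit ball of the sup norm. -/
def cubeCrossBipyramid (n : ℕ) : Set (Fin (n + 1) → ℝ) :=
  initLastEquiv n ⁻¹' cayleyBipyramid (Metric.closedBall 0 1) (crossPolytope (Fin n))

theorem cubeCrossBipyramid_eq_image (n : ℕ) :
    cubeCrossBipyramid n =
      (initLastEquiv n).symm ''
        cayleyBipyramid (Metric.closedBall 0 1) (crossPolytope (Fin n)) :=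
  ((initLastEquiv n).image_symm_eq_preimage _).symm

theorem polytopeP7_eq_cubeCrossBipyramid : polytopeP7 = cubeCrossBipyramid 6 := by
  rw [cubeCrossBipyramid_eq_image, cayleyBipyramid]
  refine Eq.trans ?_ ((initLastEquiv 6).symm.toLinearMap.image_convexHull _).symm
  refine congrArg (convexHull ℝ) (Eq.trans ?_ ((initLastEquiv 6).image_symm_eq_preimage _).symm)
  ext x
  have mem_cube : Fin.init x ∈ Metric.closedBall 0 1 ∧ x 6 = 0 ↔ (∀ i, |x i| ≤ 1) ∧ x 6 = 0 := by
    rw [mem_closedBall_zero_iff, pi_norm_le_iff_of_nonneg zero_le_one,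
      Fin.forall_fin_succ' (P := fun i ↦ |x i| ≤ 1)]
    refine and_congr_left fun hx ↦ (and_iff_left ?_).symm
    exact (abs_eq_zero.2 hx).trans_le zero_le_one
  exact or_congr mem_cube.symm (and_congr_right fun _ ↦ or_comm)

theorem mem_smul_cubeCrossBipyramid_iff [NeZero n] {r : ℝ} (hr : 0 < r) {x : Fin (n + 1) → ℝ} :
    x ∈ r • cubeCrossBipyramid n ↔ |x (Fin.last n)| ≤ r ∧
      ∑ i : Fin n, max (|x i.castSucc| - (r - |x (Fin.last n)|)) 0 ≤ |x (Fin.last n)| := by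
  have hmem : x ∈ r • cubeCrossBipyramid n ↔
      initLastEquiv n x ∈ r • cayleyBipyramid (Metric.closedBall 0 1) (crossPolytope (Fin n)) := by
    simp only [Set.mem_smul_set_iff_inv_smul_mem₀ hr.ne', cubeCrossBipyramid, Set.mem_preimage,
      map_smul]
  rw [hmem, mem_smul_cayleyBipyramid_iff (convex_closedBall 0 1) convex_crossPolytope
    crossPolytope_subset_closedBall ⟨0, zero_mem_crossPolytope⟩ hr]
  exact and_congr_right fun hheight ↦
    mem_smul_closedBall_add_smul_crossPolytope_iff (sub_nonneg.2 hheight) (abs_nonneg _)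

theorem mem_cubeCrossBipyramid_iff [NeZero n] {x : Fin (n + 1) → ℝ} :
    x ∈ cubeCrossBipyramid n ↔ |x (Fin.last n)| ≤ 1 ∧
      ∑ i : Fin n, max (|x i.castSucc| - (1 - |x (Fin.last n)|)) 0 ≤ |x (Fin.last n)| := by
  simpa only [one_smul] using mem_smul_cubeCrossBipyramid_iff (n := n) zero_lt_one

theorem cubeCrossBipyramid_eq_neg [NeZero n] : cubeCrossBipyramid n = -cubeCrossBipyramid n := by
  ext x
  simp only [Set.mem_neg, mem_cubeCrossBipyramid_iff, Pi.neg_apply, abs_neg]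

theorem cubeCrossBipyramid_subset_closedBall [NeZero n] :
    cubeCrossBipyramid n ⊆ Metric.closedBall 0 1 := by
  intro x hx
  obtain ⟨hheight, hsum⟩ := mem_cubeCrossBipyramid_iff.1 hx
  rw [mem_closedBall_zero_iff, pi_norm_le_iff_of_nonneg zero_le_one]
  refine Fin.lastCases hheight fun i ↦ ?_
  have hi : max (|x i.castSucc| - (1 - |x (Fin.last n)|)) 0 ≤ |x (Fin.last n)| :=
    (Finset.single_le_sum (f := fun i : Fin n ↦ max (|x i.castSucc| - (1 - |x (Fin.last n)|)) 0)
      (fun j _ ↦ le_max_right _ _) (Finset.mem_univ i)).trans hsum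
  rw [Real.norm_eq_abs]
  linarith [le_of_max_le_left hi]

theorem zero_mem_interior_cubeCrossBipyramid [NeZero n] :
    0 ∈ interior (cubeCrossBipyramid n) := by
  refine mem_interior_iff_mem_nhds.2
    (Filter.mem_of_superset (Metric.closedBall_mem_nhds 0 one_half_pos) fun x hx ↦ ?_)
  rw [mem_closedBall_zero_iff, pi_norm_le_iff_of_nonneg one_half_pos.le] at hx
  simp only [Real.norm_eq_abs] at hx
  refine mem_cubeCrossBipyramid_iff.2 ⟨by linarith [hx (Fin.last n)], ?_⟩
  refine (Finset.sum_nonpos fun i _ ↦ max_le ?_ le_rfl).trans (abs_nonneg _)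
  linarith [hx (Fin.last n), hx i.castSucc]

end CubeCross

section LatticePolytope

variable {n : ℕ}

theorem isLatticePolytope_convexHull {S : Set (Fin n → ℝ)} (hS : S.Finite)
    (hint : ∀ x ∈ S, ∀ i, ∃ m : ℤ, (m : ℝ) = x i) : IsLatticePolytope (convexHull ℝ S) := by
  have hinj : Function.Injective fun (v : Fin n → ℤ) i ↦ (v i : ℝ) :=
    Int.cast_injective.comp_left
  refine ⟨(hS.preimage hinj.injOn).toFinset, ?_⟩
  rw [Set.Finite.coe_toFinset, Set.image_preimage_eq_of_subset]
  intro x hx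
  choose v hv using hint x hx
  exact ⟨v, funext hv⟩

theorem latticePoints_interior_eq_singleton_zero {P : Set (Fin n → ℝ)}
    (hP : P ⊆ Metric.closedBall 0 1) (h0 : 0 ∈ interior P) :
    {v : Fin n → ℤ | (fun i ↦ (v i : ℝ)) ∈ interior P} = {0} := by
  refine Set.eq_singleton_iff_unique_mem.2 ⟨by simpa [Pi.zero_def] using h0, fun v hv ↦ ?_⟩
  have hball := interior_mono hP hv
  rw [interior_closedBall _ one_ne_zero, mem_ball_zero_iff, pi_norm_lt_iff one_pos] at hball
  refine funext fun i ↦ Int.abs_lt_one_iff.1 ?_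
  have hi : |(v i : ℝ)| < 1 := hball i
  exact_mod_cast hi

theorem closedBall_pi_eq_convexHull (ι : Type*) [Fintype ι] :
    Metric.closedBall (0 : ι → ℝ) 1 = convexHull ℝ (Set.univ.pi fun _ ↦ {-1, 1}) := by
  rw [convexHull_pi, closedBall_pi _ zero_le_one]
  simp [convexHull_pair, Real.closedBall_eq_Icc, segment_eq_Icc]

theorem finite_setOf_single_or_neg_single (ι : Type*) [Finite ι] [DecidableEq ι] :
    {y : ι → ℝ | ∃ i, y = Pi.single i 1 ∨ y = -Pi.single i 1}.Finite := by
  refine (Set.finite_iUnion fun i ↦ Set.toFinite {Pi.single i 1, -Pi.single i 1}).subset ?_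
  exact fun y hy ↦ Set.mem_iUnion.2 hy

theorem isLatticePolytope_cubeCrossBipyramid (n : ℕ) :
    IsLatticePolytope (cubeCrossBipyramid n) := by
  rw [cubeCrossBipyramid_eq_image, crossPolytope, closedBall_pi_eq_convexHull,
    cayleyBipyramid_convexHull, cayleyBipyramid]
  refine ((initLastEquiv n).symm.toLinearMap.image_convexHull _).symm ▸
    isLatticePolytope_convexHull (.image _ (.union (.prod ?_ (Set.toFinite _))
      (.prod (finite_setOf_single_or_neg_single (Fin n)) (Set.toFinite _)))) ?_
  · exact Set.Finite.pi fun _ ↦ Set.toFinite _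
  · rintro _ ⟨⟨y, h⟩, hp, rfl⟩
    suffices (∀ i, ∃ m : ℤ, (m : ℝ) = y i) ∧ ∃ m : ℤ, (m : ℝ) = h by
      simpa [Fin.forall_fin_succ', initLastEquiv] using this
    have sign_int {t : ℝ} (ht : t ∈ ({-1, 1} : Set ℝ)) : ∃ m : ℤ, (m : ℝ) = t := by
      rcases ht with rfl | rfl
      exacts [⟨-1, by simp⟩, ⟨1, by simp⟩]
    rcases hp with ⟨hy, rfl⟩ | ⟨⟨i, rfl | rfl⟩, hh⟩
    · exact ⟨fun i ↦ sign_int (hy i trivial), 0, Int.cast_zero⟩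
    · exact ⟨fun j ↦ ⟨Pi.single (M := fun _ ↦ ℤ) i 1 j, by simp [Pi.single_apply]⟩, sign_int hh⟩
    · exact ⟨fun j ↦ ⟨-Pi.single (M := fun _ ↦ ℤ) i 1 j, by simp [Pi.single_apply]⟩, sign_int hh⟩

end LatticePolytope

section LatticePointCount

open Finset.HasAntidiagonal (antidiagonal)

/-- The integer points of `a C_n + b C_n^⋆`: those whose entries exceed `a` in absolute value by a
total of at most `b`. Subtraction in `ℕ` is truncated, so that small entries do not contribute. -/
noncomputable def cubeCrossPoints (n a b : ℕ) : Finset (Fin n → ℤ) :=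
  {v ∈ Fintype.piFinset fun _ ↦ Finset.Icc (-((a + b : ℕ) : ℤ)) ((a + b : ℕ) : ℤ) |
    ∑ i, ((v i).natAbs - a) ≤ b}

theorem mem_cubeCrossPoints {n a b : ℕ} {v : Fin n → ℤ} :
    v ∈ cubeCrossPoints n a b ↔ ∑ i, ((v i).natAbs - a) ≤ b := by
  rw [cubeCrossPoints, Finset.mem_filter, and_iff_right_iff_imp]
  refine fun hv ↦ Fintype.mem_piFinset.2 fun i ↦ Finset.mem_Icc.2 ?_
  have hi := (Finset.single_le_sum (f := fun i ↦ (v i).natAbs - a) (fun _ _ ↦ Nat.zero_le _)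
    (Finset.mem_univ i)).trans hv
  lia

theorem sum_Icc_natAbs_sub {M : Type*} [AddCommMonoid M] (a b : ℕ) (f : ℕ → M) :
    ∑ z ∈ Finset.Icc (-((a + b : ℕ) : ℤ)) ((a + b : ℕ) : ℤ), f (z.natAbs - a) =
      (2 * a + 1) • f 0 + 2 • ∑ c ∈ Finset.range b, f (c + 1) := by
  induction b with
  | zero =>
    have hconst : ∀ z ∈ Finset.Icc (-((a + 0 : ℕ) : ℤ)) ((a + 0 : ℕ) : ℤ),
        f (z.natAbs - a) = f 0 := by
      intro z hz
      rw [Finset.mem_Icc] at hz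
      congr 1
      lia
    rw [Finset.sum_congr rfl hconst, Finset.sum_const, Int.card_Icc, Finset.sum_range_zero,
      smul_zero, add_zero, add_zero]
    congr 1
    lia
  | succ b ih =>
    have hIcc : Finset.Icc (-((a + (b + 1) : ℕ) : ℤ)) ((a + (b + 1) : ℕ) : ℤ) =
        insert (-((a + (b + 1) : ℕ) : ℤ)) (insert ((a + (b + 1) : ℕ) : ℤ)
          (Finset.Icc (-((a + b : ℕ) : ℤ)) ((a + b : ℕ) : ℤ))) := by
      ext z
      simp only [Finset.mem_insert, Finset.mem_Icc]
      lia
    have hsub : a + (b + 1) - a = b + 1 := by lia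
    rw [hIcc, Finset.sum_insert (by simp; lia), Finset.sum_insert (by simp), ih,
      Finset.sum_range_succ, Int.natAbs_neg, Int.natAbs_natCast, hsub]
    abel

theorem card_cubeCrossPoints_succ (n a b : ℕ) :
    (cubeCrossPoints (n + 1) a b).card =
      (2 * a + 1) * (cubeCrossPoints n a b).card +
        2 * ∑ i ∈ Finset.range b, (cubeCrossPoints n a i).card := by
  have hbij : (cubeCrossPoints (n + 1) a b).card =
      ((Finset.Icc (-((a + b : ℕ) : ℤ)) ((a + b : ℕ) : ℤ)).sigma fun z ↦
        cubeCrossPoints n a (b - (z.natAbs - a))).card := by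
    refine Finset.card_nbij' (fun v ↦ ⟨v 0, Fin.tail v⟩) (fun p ↦ Fin.cons p.1 p.2) ?_ ?_
      (fun v _ ↦ Fin.cons_self_tail v) (fun p _ ↦ by simp only [Fin.cons_zero, Fin.tail_cons])
    · intro v hv
      simp only [SetLike.mem_coe, Finset.mem_sigma, Finset.mem_Icc, mem_cubeCrossPoints,
        Fin.sum_univ_succ, Fin.tail] at hv ⊢
      lia
    · rintro ⟨z, w⟩ hp
      simp only [SetLike.mem_coe, Finset.mem_sigma, Finset.mem_Icc, mem_cubeCrossPoints,
        Fin.sum_univ_succ, Fin.cons_zero, Fin.cons_succ] at hp ⊢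
      lia
  rw [hbij, Finset.card_sigma,
    sum_Icc_natAbs_sub a b fun e ↦ (cubeCrossPoints n a (b - e)).card, Nat.sub_zero, smul_eq_mul,
    smul_eq_mul, ← Finset.sum_range_reflect fun i ↦ (cubeCrossPoints n a i).card]
  simp only [Nat.sub_sub, Nat.add_comm 1]

/-- The operator sending `f` to its sequence of partial sums `b ↦ f 0 + ⋯ + f (b - 1)`, through
which the count of `cubeCrossPoints` is computed by the binomial theorem. -/
def partialSum : Module.End ℕ (ℕ → ℕ) where
  toFun f b := ∑ i ∈ Finset.range b, f i
  map_add' _ _ := funext fun _ ↦ Finset.sum_add_distrib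
  map_smul' c _ := funext fun _ ↦ (Finset.mul_sum _ _ c).symm

theorem partialSum_apply (f : ℕ → ℕ) (b : ℕ) :
    partialSum f b = ∑ i ∈ Finset.range b, f i := rfl

theorem partialSum_choose (m : ℕ) :
    partialSum (fun b ↦ b.choose m) = fun b ↦ b.choose (m + 1) := by
  ext b
  rw [partialSum_apply]
  induction b with
  | zero => rw [Finset.sum_range_zero, Nat.choose_zero_succ]
  | succ b ih => rw [Finset.sum_range_succ, ih, Nat.choose_succ_succ, add_comm]

theorem partialSum_pow_one (m : ℕ) : (partialSum ^ m) 1 = fun b ↦ b.choose m := by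
  induction m with
  | zero => simp only [pow_zero, Module.End.one_apply, Nat.choose_zero_right, Pi.one_def]
  | succ m ih => rw [pow_succ', Module.End.mul_apply, ih, partialSum_choose]

theorem card_cubeCrossPoints_eq_pow (n a : ℕ) :
    (fun b ↦ (cubeCrossPoints n a b).card) =
      ((2 • partialSum + (2 * a + 1) • 1) ^ n : Module.End ℕ (ℕ → ℕ)) 1 := by
  induction n with
  | zero => ext b; simp [cubeCrossPoints]
  | succ n ih =>
    rw [pow_succ', Module.End.mul_apply, ← ih]
    ext b
    rw [LinearMap.add_apply, LinearMap.smul_apply, LinearMap.smul_apply, Module.End.one_apply,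
      Pi.add_apply, Pi.smul_apply, Pi.smul_apply, partialSum_apply, smul_eq_mul, smul_eq_mul,
      card_cubeCrossPoints_succ, add_comm]

theorem card_cubeCrossPoints (n a b : ℕ) :
    (cubeCrossPoints n a b).card =
      ∑ m ∈ Finset.range (n + 1), n.choose m * 2 ^ m * (b.choose m * (2 * a + 1) ^ (n - m)) := by
  have hcomm : Commute (2 • partialSum) ((2 * a + 1) • 1) :=
    (Commute.one_right _).smul_right (2 * a + 1)
  refine (congrFun (card_cubeCrossPoints_eq_pow n a) b).trans ?_
  rw [hcomm.add_pow, LinearMap.sum_apply, Finset.sum_apply]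
  refine Finset.sum_congr rfl fun m _ ↦ ?_
  simp only [_root_.smul_pow, one_pow, ← nsmul_one (n.choose m), mul_smul_comm,
    mul_one, LinearMap.smul_apply, partialSum_pow_one, Pi.smul_apply, smul_eq_mul]
  ring

theorem natCast_sub_eq_max {R : Type*} [Ring R] [LinearOrder R] [IsStrictOrderedRing R]
    (m n : ℕ) : ((m - n : ℕ) : R) = max (m - n : R) 0 := by
  rw [← sub_self (n : R), max_sub_sub_right, ← Nat.cast_max, ← tsub_add_eq_max, Nat.cast_add,
    add_sub_cancel_right]

theorem intCast_mem_smul_cubeCrossBipyramid_iff {n : ℕ} [NeZero n] {k : ℕ} (hk : 0 < k)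
    {v : Fin (n + 1) → ℤ} :
    (fun i ↦ (v i : ℝ)) ∈ (k : ℝ) • cubeCrossBipyramid n ↔ (v (Fin.last n)).natAbs ≤ k ∧
      Fin.init v ∈ cubeCrossPoints n (k - (v (Fin.last n)).natAbs) (v (Fin.last n)).natAbs := by
  rw [mem_smul_cubeCrossBipyramid_iff (Nat.cast_pos.2 hk), mem_cubeCrossPoints]
  simp only [← Int.cast_abs, ← Nat.cast_natAbs, Nat.cast_le]
  refine and_congr_right fun hheight ↦ ?_
  simp only [← Nat.cast_sub hheight, ← natCast_sub_eq_max]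
  norm_cast

theorem latticePointCount_smul_cubeCrossBipyramid {n : ℕ} [NeZero n] {k : ℕ} (hk : 0 < k) :
    latticePointCount ((k : ℝ) • cubeCrossBipyramid n) + (2 * k + 1) ^ n =
      2 * ∑ p ∈ antidiagonal k, (cubeCrossPoints n p.2 p.1).card := by
  have hbij : Set.BijOn (fun v : Fin (n + 1) → ℤ ↦ (⟨v (Fin.last n), Fin.init v⟩ : (_ : ℤ) × _))
      {v | (fun i ↦ (v i : ℝ)) ∈ (k : ℝ) • cubeCrossBipyramid n}
      ((Finset.Icc (-((0 + k : ℕ) : ℤ)) ((0 + k : ℕ) : ℤ)).sigma fun z ↦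
        cubeCrossPoints n (k - (z.natAbs - 0)) (z.natAbs - 0)) := by
    refine Set.InvOn.bijOn (f' := fun p ↦ Fin.snoc p.2 p.1)
      ⟨fun v _ ↦ Fin.snoc_init_self v, fun p _ ↦ ?_⟩ (fun v hv ↦ ?_) fun p hp ↦ ?_
    · simp only [Fin.snoc_last, Fin.init_snoc]
    · obtain ⟨hheight, hslice⟩ := (intCast_mem_smul_cubeCrossBipyramid_iff hk).1 hv
      simp only [SetLike.mem_coe, Finset.mem_sigma, Finset.mem_Icc]
      exact ⟨by lia, hslice⟩
    · simp only [SetLike.mem_coe, Finset.mem_sigma, Finset.mem_Icc] at hp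
      refine (intCast_mem_smul_cubeCrossBipyramid_iff hk).2 ?_
      simp only [Fin.snoc_last, Fin.init_snoc]
      exact ⟨by lia, hp.2⟩
  have hbase : (cubeCrossPoints n k 0).card = (2 * k + 1) ^ n := by
    simp [card_cubeCrossPoints, Finset.sum_range_succ']
  rw [latticePointCount, hbij.ncard_eq, Set.ncard_coe_finset, Finset.card_sigma,
    sum_Icc_natAbs_sub 0 k fun c ↦ (cubeCrossPoints n (k - c) c).card,
    Finset.Nat.sum_antidiagonal_eq_sum_range_succ_mk, Finset.sum_range_succ', Nat.sub_zero, hbase,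
    smul_eq_mul, smul_eq_mul]
  ring

end LatticePointCount

section EhrhartPolynomial

open Finset.HasAntidiagonal (antidiagonal)
open scoped Nat

theorem sum_antidiagonal_choose_mul_choose (k m l : ℕ) :
    ∑ p ∈ antidiagonal k, p.1.choose m * p.2.choose l = (k + 1).choose (m + l + 1) := by
  induction k generalizing m with
  | zero => cases m <;> cases l <;> simp [Nat.choose_eq_zero_of_lt]
  | succ k ih =>
    rw [Finset.Nat.sum_antidiagonal_succ]
    cases m with
    | zero =>
      have ih0 := ih 0
      simp only [Nat.choose_zero_right, one_mul, zero_add] at ih0 ⊢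
      rw [ih0, ← Nat.choose_succ_succ]
    | succ m =>
      simp only [Nat.choose_zero_succ, zero_mul, zero_add, Nat.choose_succ_succ _ m, add_mul,
        Finset.sum_add_distrib]
      rw [ih, ih, Nat.choose_succ_succ (k + 1), Nat.add_right_comm m 1 l]

/-- The polynomial whose value at `k` is the binomial coefficient `(k + 1).choose (r + 1)`. -/
noncomputable def succChoosePoly (r : ℕ) : ℝ[X] :=
  C ((r + 1)! : ℝ)⁻¹ * ((X + 1) * descPochhammer ℝ r)

theorem succChoosePoly_eval (r k : ℕ) :
    (succChoosePoly r).eval (k : ℝ) = (k + 1).choose (r + 1) := by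
  rw [Nat.cast_choose_eq_descPochhammer_div, descPochhammer_succ_left, succChoosePoly]
  simp only [eval_mul, eval_C, eval_add, eval_X, eval_one, eval_comp, eval_sub, Nat.cast_succ,
    add_sub_cancel_right]
  rw [inv_mul_eq_div]

theorem descPochhammer_succ_coeff_one (R : Type*) [CommRing R] (r : ℕ) :
    (descPochhammer R (r + 1)).coeff 1 = (-1) ^ r * r ! := by
  induction r with
  | zero => rw [zero_add, descPochhammer_one, coeff_X_one, pow_zero, Nat.factorial_zero,
      Nat.cast_one, mul_one]
  | succ r ih =>
    have coeff_zero : (descPochhammer R (r + 1)).coeff 0 = 0 := by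
      rw [coeff_zero_eq_eval_zero, descPochhammer_ne_zero_eval_zero R r.succ_ne_zero]
    rw [descPochhammer_succ_right, mul_coeff_one, coeff_zero, ih, Nat.factorial_succ]
    simp only [Nat.cast_add, Nat.cast_one, coeff_sub, coeff_X_one, coeff_add, coeff_natCast_ite,
      one_ne_zero, ↓reduceIte, Nat.cast_zero, zero_add, zero_mul, coeff_X_zero, coeff_one_zero,
      zero_sub, neg_add_rev, Nat.cast_mul]
    ring

theorem succChoosePoly_coeff_one (r : ℕ) :
    (succChoosePoly r).coeff 1 =
      if r = 0 then 1 else (-1 : ℝ) ^ (r + 1) / (r * (r + 1)) := by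
  rw [succChoosePoly, coeff_C_mul, mul_coeff_one]
  cases r with
  | zero => simp [coeff_one]
  | succ r =>
    rw [descPochhammer_succ_coeff_one, if_neg r.succ_ne_zero, coeff_zero_eq_eval_zero _,
      coeff_zero_eq_eval_zero _, descPochhammer_ne_zero_eval_zero ℝ r.succ_ne_zero]
    simp only [Nat.factorial_succ, Nat.cast_mul, Nat.cast_add, Nat.cast_one, mul_inv_rev, eval_add,
      eval_X, eval_one, zero_add, one_mul, coeff_add, coeff_X_one, mul_zero, add_zero]
    field_simp
    ring

theorem eval_natCast_eq_sum_choose_mul_fwdDiff {R : Type*} [CommRing R] (P : R[X]) (a : ℕ) :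
    P.eval (a : R) =
      ∑ j ∈ Finset.range (P.natDegree + 1), a.choose j * (fwdDiff 1)^[j] P.eval 0 := by
  have newton := shift_eq_sum_fwdDiff_iter (1 : R) P.eval a 0
  simp only [zero_add, nsmul_eq_mul, mul_one] at newton
  refine newton.trans ?_
  refine (Finset.sum_subset (Finset.range_mono (Nat.succ_le_succ (le_max_left a P.natDegree)))
    fun j _ hj ↦ ?_).trans (Finset.sum_subset
      (Finset.range_mono (Nat.succ_le_succ (le_max_right a P.natDegree))) fun j _ hj ↦ ?_).symm
  · rw [Nat.choose_eq_zero_of_lt (by simpa using hj), Nat.cast_zero, zero_mul]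
  · rw [fwdDiff_iter_eq_zero_of_degree_lt (by simpa using hj), Pi.zero_apply, mul_zero]

/-- The polynomial in `k` whose value is the convolution `∑ b + a = k, b.choose m * P.eval a`,
obtained from the Newton expansion of `P`. -/
noncomputable def chooseConvPoly (m : ℕ) (P : ℝ[X]) : ℝ[X] :=
  ∑ j ∈ Finset.range (P.natDegree + 1), C ((fwdDiff 1)^[j] P.eval 0) * succChoosePoly (m + j)

theorem chooseConvPoly_eval (m : ℕ) (P : ℝ[X]) (k : ℕ) :
    (chooseConvPoly m P).eval (k : ℝ) =
      ∑ p ∈ antidiagonal k, (p.1.choose m : ℝ) * P.eval (p.2 : ℝ) := by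
  simp only [eval_natCast_eq_sum_choose_mul_fwdDiff P, Finset.mul_sum]
  rw [Finset.sum_comm, chooseConvPoly, eval_finsetSum]
  refine Finset.sum_congr rfl fun j _ ↦ ?_
  rw [eval_mul, eval_C, succChoosePoly_eval, ← sum_antidiagonal_choose_mul_choose, Nat.cast_sum,
    Finset.mul_sum]
  refine Finset.sum_congr rfl fun p _ ↦ ?_
  rw [Nat.cast_mul]
  ring

/-- The Ehrhart polynomial of `cubeCrossBipyramid n`. -/
noncomputable def cubeCrossEhrhartPoly (n : ℕ) : ℝ[X] :=
  C 2 * ∑ m ∈ Finset.range (n + 1), C (n.choose m * 2 ^ m : ℝ) *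
    chooseConvPoly m ((2 * X + 1) ^ (n - m)) - (2 * X + 1) ^ n

theorem isEhrhartPoly_cubeCrossBipyramid (n : ℕ) [NeZero n] :
    IsEhrhartPoly (cubeCrossBipyramid n) (cubeCrossEhrhartPoly n) := by
  intro k hk
  have hcount : (latticePointCount ((k : ℝ) • cubeCrossBipyramid n) : ℝ) + (2 * k + 1) ^ n =
      2 * ∑ p ∈ antidiagonal k, ((cubeCrossPoints n p.2 p.1).card : ℝ) :=
    mod_cast latticePointCount_smul_cubeCrossBipyramid hk
  have hcard (a b : ℕ) : ((cubeCrossPoints n a b).card : ℝ) = ∑ m ∈ Finset.range (n + 1),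
      n.choose m * 2 ^ m * (b.choose m * ((2 * X + 1 : ℝ[X]) ^ (n - m)).eval (a : ℝ)) := by
    simp [card_cubeCrossPoints]
  rw [eq_sub_of_add_eq hcount]
  simp only [hcard]
  rw [Finset.sum_comm]
  simp only [← Finset.mul_sum, ← chooseConvPoly_eval]
  simp [cubeCrossEhrhartPoly, eval_finsetSum]

theorem natDegree_two_mul_X_add_one_pow (r : ℕ) : ((2 * X + 1 : ℝ[X]) ^ r).natDegree = r := by
  rw [natDegree_pow, show (2 * X + 1 : ℝ[X]).natDegree = 1 by compute_degree!, mul_one]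

theorem chooseConvPoly_coeff_one (m : ℕ) (P : ℝ[X]) :
    (chooseConvPoly m P).coeff 1 = ∑ j ∈ Finset.range (P.natDegree + 1),
      (fwdDiff 1)^[j] P.eval 0 * (succChoosePoly (m + j)).coeff 1 := by
  simp only [chooseConvPoly, finsetSum_coeff, coeff_C_mul]

theorem fwdDiff_iter_two_mul_X_add_one_pow_zero {R : Type*} [CommRing R] (r j : ℕ) :
    (fwdDiff 1)^[j] ((2 * X + 1 : R[X]) ^ r).eval 0 =
      ∑ i ∈ Finset.range (j + 1), (-1 : R) ^ (j - i) * j.choose i * (2 * i + 1) ^ r := by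
  simp [fwdDiff_iter_eq_sum_shift]

theorem two_mul_X_add_one_pow_coeff_one {R : Type*} [CommRing R] (n : ℕ) :
    ((2 * X + 1 : R[X]) ^ n).coeff 1 = 2 * n := by
  have h := coeff_derivative ((2 * X + 1 : R[X]) ^ n) 0
  rw [coeff_zero_eq_eval_zero, derivative_pow] at h
  simpa [mul_comm] using h.symm

theorem cubeCrossEhrhartPoly_coeff_one (n : ℕ) :
    (cubeCrossEhrhartPoly n).coeff 1 = 2 * ∑ m ∈ Finset.range (n + 1), n.choose m * 2 ^ m *
      ∑ j ∈ Finset.range (n - m + 1),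
        (∑ i ∈ Finset.range (j + 1),
          (-1 : ℝ) ^ (j - i) * j.choose i * (2 * i + 1) ^ (n - m)) *
            (succChoosePoly (m + j)).coeff 1 - 2 * n := by
  rw [cubeCrossEhrhartPoly, coeff_sub, coeff_C_mul, two_mul_X_add_one_pow_coeff_one]
  simp only [finsetSum_coeff, coeff_C_mul, chooseConvPoly_coeff_one,
    natDegree_two_mul_X_add_one_pow, fwdDiff_iter_two_mul_X_add_one_pow_zero]

theorem cubeCrossEhrhartPoly_six_coeff_one : (cubeCrossEhrhartPoly 6).coeff 1 = 1534 / 105 := by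
  rw [cubeCrossEhrhartPoly_coeff_one]
  simp only [succChoosePoly_coeff_one]
  norm_num [Finset.sum_range_succ, Nat.choose]

end EhrhartPolynomial

theorem P7_counterexample_to_Wills :
    polytopeP7 = -polytopeP7 ∧ IsLatticePolytope polytopeP7 ∧
    {v : Fin 7 → ℤ | (fun i => (v i : ℝ)) ∈ interior polytopeP7} = {0} ∧
    ∃ L : Polynomial ℝ, IsEhrhartPoly polytopeP7 L ∧
      L.coeff 1 = 1534 / 105 ∧ 14 < L.coeff 1 := by
  rw [polytopeP7_eq_cubeCrossBipyramid]
  refine ⟨cubeCrossBipyramid_eq_neg, isLatticePolytope_cubeCrossBipyramid 6,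
    latticePoints_interior_eq_singleton_zero cubeCrossBipyramid_subset_closedBall
      zero_mem_interior_cubeCrossBipyramid,
    cubeCrossEhrhartPoly 6, isEhrhartPoly_cubeCrossBipyramid 6,
    cubeCrossEhrhartPoly_six_coeff_one, ?_⟩
  rw [cubeCrossEhrhartPoly_six_coeff_one]
  norm_num
end

section
/- For every integer n ≥ 7 there exists a centrally symmetric lattice polytope P ⊂ ℝ^n whose only interior lattice point is the origin and whose linear Ehrhart coefficient satisfies ℓ_1(P) > 2n = ℓ_1(C_n). Hence Wills' conjecture fails in every dimension n ≥ 7. -/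
open MeasureTheory Polynomial Pointwise

/-!
The counterexample is `P = (C₅ ⊕ C₂) × C_{n-7}`, where the free sum `C_p ⊕ C_q` is the convex hull
of `C_p × {0} ∪ {0} × C_q`. A point `(x, y, z)` lies in `k • ((C_p ⊕ C_q) × C_d)` iff
`‖x‖ + ‖y‖ ≤ k` and `‖z‖ ≤ k` in the sup norm, so its lattice points are covered by the boxes
`‖x‖ ≤ i`, `‖y‖ ≤ k - i`, `‖z‖ ≤ k` with `0 ≤ i ≤ k`. Each lattice point lies in an interval of
consecutive boxes, so counting boxes minus intersections of neighbouring boxes counts every lattice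
point once. For `p = 5`, `q = 2` this yields linear Ehrhart coefficient
`334 / 21 + 2 (n - 7) > 2 n`.
-/

section Boxes

variable {ι : Type*}

lemma mem_Icc_neg_iff_forall_abs_le {α : Type*} [AddCommGroup α] [LinearOrder α]
    [IsOrderedAddMonoid α] {x r : ι → α} : x ∈ Set.Icc (-r) r ↔ ∀ i, |x i| ≤ r i := by
  simp only [Set.mem_Icc, Pi.le_def, Pi.neg_apply, abs_le, forall_and]

lemma intCast_card_Icc_neg [Fintype ι] [DecidableEq ι] {r : ι → ℤ} (hr : 0 ≤ r) :
    ((Finset.Icc (-r) r).card : ℤ) = ∏ i, (2 * r i + 1) := by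
  rw [Pi.card_Icc, Nat.cast_prod]
  refine Finset.prod_congr rfl fun i _ => ?_
  have hri : 0 ≤ r i := hr i
  rw [Pi.neg_apply, Int.card_Icc_of_le _ _ (by linarith)]
  ring

lemma convexHull_pi_pair [Finite ι] {a b : ι → ℝ} (hab : a ≤ b) :
    convexHull ℝ (Set.univ.pi fun i => {a i, b i}) = Set.Icc a b := by
  rw [convexHull_pi, ← Set.pi_univ_Icc]
  exact Set.pi_congr rfl fun i _ => by rw [convexHull_pair, segment_eq_Icc (hab i)]

lemma mem_convexHull_Icc_neg_union_Icc_neg {a b x : ι → ℝ} (ha : 0 ≤ a) (hb : 0 ≤ b) :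
    x ∈ convexHull ℝ (Set.Icc (-a) a ∪ Set.Icc (-b) b) ↔
      ∃ s t : ℝ, 0 ≤ s ∧ 0 ≤ t ∧ s + t = 1 ∧ ∀ i, |x i| ≤ s * a i + t * b i := by
  rw [convexHull_union ⟨0, by simpa using ha⟩ ⟨0, by simpa using hb⟩,
    (convex_Icc _ _).convexHull_eq, (convex_Icc _ _).convexHull_eq, mem_convexJoin]
  simp only [mem_Icc_neg_iff_forall_abs_le]
  constructor
  · rintro ⟨y, hy, z, hz, s, t, hs, ht, hst, rfl⟩
    refine ⟨s, t, hs, ht, hst, fun i => ?_⟩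
    calc |s * y i + t * z i| ≤ |s * y i| + |t * z i| := abs_add_le _ _
      _ = s * |y i| + t * |z i| := by rw [abs_mul, abs_mul, abs_of_nonneg hs, abs_of_nonneg ht]
      _ ≤ s * a i + t * b i := by gcongr <;> apply_assumption
  · rintro ⟨s, t, hs, ht, hst, hx⟩
    -- With `w = s a + t b`, take the points `a x / w` and `b x / w`; if `w i = 0`, then `x i = 0`.
    have hw (i : ι) : 0 ≤ s * a i + t * b i := (abs_nonneg _).trans (hx i)
    have hratio (i : ι) : |x i / (s * a i + t * b i)| ≤ 1 := by
      rw [abs_div, abs_of_nonneg (hw i)]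
      exact div_le_one_of_le₀ (hx i) (hw i)
    refine ⟨fun i => a i * (x i / (s * a i + t * b i)), fun i => ?_,
      fun i => b i * (x i / (s * a i + t * b i)), fun i => ?_,
      s, t, hs, ht, hst, funext fun i => ?_⟩
    · rw [abs_mul, abs_of_nonneg (ha i)]
      exact mul_le_of_le_one_right (ha i) (hratio i)
    · rw [abs_mul, abs_of_nonneg (hb i)]
      exact mul_le_of_le_one_right (hb i) (hratio i)
    · have hx0 (h : s * a i + t * b i = 0) : x i = 0 := abs_nonpos_iff.1 (h ▸ hx i)
      calc s * (a i * (x i / (s * a i + t * b i))) + t * (b i * (x i / (s * a i + t * b i)))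
          = (s * a i + t * b i) * (x i / (s * a i + t * b i)) := by ring
        _ = x i := mul_div_cancel_of_imp' hx0

lemma setOf_intCast_mem_interior_eq_singleton_zero [Finite ι] {S : Set (ι → ℝ)}
    (hS : S ⊆ Set.Icc (-1) 1) (h0 : S ∈ nhds 0) :
    {v : ι → ℤ | (fun i => (v i : ℝ)) ∈ interior S} = {0} := by
  ext v
  simp only [Set.mem_ofPred_eq, Set.mem_singleton_iff]
  constructor
  · intro hv
    have hv' := interior_mono hS hv
    rw [← Set.pi_univ_Icc, interior_pi_set Set.finite_univ] at hv'
    funext i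
    have hi : (v i : ℝ) ∈ Set.Ioo (-1) 1 := by simpa using hv' i trivial
    have hlower : -1 < v i := by exact_mod_cast hi.1
    have hupper : v i < 1 := by exact_mod_cast hi.2
    simp only [Pi.zero_apply]
    lia
  · rintro rfl
    simpa [← Pi.zero_def] using mem_interior_iff_mem_nhds.2 h0

end Boxes

section LatticePolytopes

variable {n : ℕ}

lemma isLatticePolytope_Icc {a b : Fin n → ℤ} (hab : a ≤ b) :
    IsLatticePolytope (Set.Icc (fun i => (a i : ℝ)) fun i => (b i : ℝ)) := by
  refine ⟨Fintype.piFinset fun i => {a i, b i}, ?_⟩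
  rw [← convexHull_pi_pair fun i => Int.cast_le.2 (hab i), Fintype.coe_piFinset]
  have himage := Set.piMap_image_univ_pi (fun _ => ((↑) : ℤ → ℝ)) fun i => {a i, b i}
  simp only [Set.image_pair] at himage
  simp only [Finset.coe_insert, Finset.coe_singleton, ← himage]
  rfl

lemma IsLatticePolytope.convexHull_union {P Q : Set (Fin n → ℝ)} (hP : IsLatticePolytope P)
    (hQ : IsLatticePolytope Q) : IsLatticePolytope (convexHull ℝ (P ∪ Q)) := by
  obtain ⟨V, rfl⟩ := hP
  obtain ⟨W, rfl⟩ := hQ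
  refine ⟨V ∪ W, ?_⟩
  rw [Finset.coe_union, Set.image_union, convexHull_convexHull_union_left,
    convexHull_convexHull_union_right]

end LatticePolytopes

lemma card_biUnion_range_succ_add_sum_card_inter {α : Type*} [DecidableEq α] (B : ℕ → Finset α)
    (m : ℕ) (hB : ∀ i j l, i ≤ j → j ≤ l → l ≤ m → B i ∩ B l ⊆ B j) :
    ((Finset.range (m + 1)).biUnion B).card + ∑ i ∈ Finset.range m, (B i ∩ B (i + 1)).card =
      ∑ i ∈ Finset.range (m + 1), (B i).card := by
  induction m with
  | zero => simp
  | succ m ih =>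
    have hinter : B (m + 1) ∩ (Finset.range (m + 1)).biUnion B = B m ∩ B (m + 1) := by
      refine Finset.Subset.antisymm (fun v hv => ?_) fun v hv => ?_
      · obtain ⟨hv, hvU⟩ := Finset.mem_inter.1 hv
        obtain ⟨i, hi, hvi⟩ := Finset.mem_biUnion.1 hvU
        have him : i ≤ m := Nat.lt_succ_iff.1 (Finset.mem_range.1 hi)
        exact Finset.mem_inter.2
          ⟨hB i m (m + 1) him m.le_succ le_rfl (Finset.mem_inter.2 ⟨hvi, hv⟩), hv⟩
      · obtain ⟨hvm, hv⟩ := Finset.mem_inter.1 hv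
        exact Finset.mem_inter.2
          ⟨hv, Finset.mem_biUnion.2 ⟨m, Finset.self_mem_range_succ m, hvm⟩⟩
    have hcard := Finset.card_union_add_card_inter (B (m + 1)) ((Finset.range (m + 1)).biUnion B)
    rw [hinter] at hcard
    have ih := ih fun i j l hij hjl hlm => hB i j l hij hjl (hlm.trans m.le_succ)
    rw [Finset.range_add_one (n := m + 1), Finset.biUnion_insert,
      Finset.sum_insert Finset.notMem_range_self, Finset.sum_range_succ _ m]
    lia

/-- The vector with `p` entries `a`, followed by `q` entries `b` and `d` entries `c`. It lists the
half side lengths of a box that is a product of three cubes. -/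
def blockVec {R : Type*} (p q d : ℕ) (a b c : R) : Fin (p + q + d) → R :=
  Fin.append (Fin.append (fun _ => a) fun _ => b) fun _ => c

section BlockVec

variable {R : Type*} {p q d : ℕ}

lemma forall_blockVec {Q : R → Prop} {a b c : R} (ha : Q a) (hb : Q b) (hc : Q c) :
    ∀ i, Q (blockVec p q d a b c i) := by
  simp [Fin.forall_fin_add, blockVec, ha, hb, hc]

lemma map_blockVec {S : Type*} (f : R → S) (a b c : R) (i : Fin (p + q + d)) :
    f (blockVec p q d a b c i) = blockVec p q d (f a) (f b) (f c) i := by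
  revert i
  simp [Fin.forall_fin_add, blockVec]

lemma mul_blockVec_add_mul_blockVec [Mul R] [Add R] (s t a b c a' b' c' : R)
    (i : Fin (p + q + d)) :
    s * blockVec p q d a b c i + t * blockVec p q d a' b' c' i =
      blockVec p q d (s * a + t * a') (s * b + t * b') (s * c + t * c') i := by
  revert i
  simp [Fin.forall_fin_add, blockVec]

lemma prod_blockVec [CommMonoid R] (a b c : R) :
    ∏ i, blockVec p q d a b c i = a ^ p * b ^ q * c ^ d := by
  simp [Fin.prod_univ_add, blockVec]

lemma forall_abs_le_blockVec_iff [Lattice R] [AddGroup R] {x : Fin (p + q + d) → R} {a b c : R} :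
    (∀ i, |x i| ≤ blockVec p q d a b c i) ↔
      (∀ i, |x (Fin.castAdd d (Fin.castAdd q i))| ≤ a) ∧
        (∀ j, |x (Fin.castAdd d (Fin.natAdd p j))| ≤ b) ∧ ∀ l, |x (Fin.natAdd (p + q) l)| ≤ c := by
  simp [Fin.forall_fin_add, blockVec, and_assoc]

end BlockVec

/-- The polytope `(C_p ⊕ C_q) × C_d`, where `C_m = [-1, 1]^m` and `⊕` is the free sum. -/
def freeSumCubesProdCube (p q d : ℕ) : Set (Fin (p + q + d) → ℝ) :=
  convexHull ℝ (Set.Icc (-blockVec p q d 1 0 1) (blockVec p q d 1 0 1) ∪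
    Set.Icc (-blockVec p q d 0 1 1) (blockVec p q d 0 1 1))

section Polytope

variable {p q d : ℕ}

lemma mem_freeSumCubesProdCube {x : Fin (p + q + d) → ℝ} :
    x ∈ freeSumCubesProdCube p q d ↔
      ∃ s t : ℝ, 0 ≤ s ∧ 0 ≤ t ∧ s + t = 1 ∧ ∀ i, |x i| ≤ blockVec p q d s t 1 i := by
  rw [freeSumCubesProdCube, mem_convexHull_Icc_neg_union_Icc_neg
    (forall_blockVec (Q := (0 ≤ ·)) zero_le_one le_rfl zero_le_one)
    (forall_blockVec (Q := (0 ≤ ·)) le_rfl zero_le_one zero_le_one)]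
  refine exists₂_congr fun s t => and_congr_right fun _ => and_congr_right fun _ =>
    and_congr_right fun hst => forall_congr' fun i => ?_
  simp [mul_blockVec_add_mul_blockVec, hst]

lemma isLatticePolytope_freeSumCubesProdCube :
    IsLatticePolytope (freeSumCubesProdCube p q d) := by
  have hbox {a b c : ℤ} (ha : 0 ≤ a) (hb : 0 ≤ b) (hc : 0 ≤ c) : IsLatticePolytope
      (Set.Icc (-blockVec p q d (a : ℝ) b c) (blockVec p q d (a : ℝ) b c)) := by
    have hr (i) : 0 ≤ blockVec p q d a b c i := forall_blockVec ha hb hc i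
    have hcast : (fun i => ((blockVec p q d a b c i : ℤ) : ℝ)) = blockVec p q d (a : ℝ) b c :=
      funext (map_blockVec _ a b c)
    have hIcc := isLatticePolytope_Icc (neg_le_self hr)
    simp only [Pi.neg_apply, Int.cast_neg] at hIcc
    rwa [← Pi.neg_def, hcast] at hIcc
  simpa [freeSumCubesProdCube] using (hbox zero_le_one le_rfl zero_le_one).convexHull_union
    (hbox le_rfl zero_le_one zero_le_one)

lemma neg_freeSumCubesProdCube : -freeSumCubesProdCube p q d = freeSumCubesProdCube p q d := by
  ext x
  simp [mem_freeSumCubesProdCube]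

lemma freeSumCubesProdCube_subset_Icc : freeSumCubesProdCube p q d ⊆ Set.Icc (-1) 1 := by
  intro x hx
  obtain ⟨s, t, hs, ht, hst, hx⟩ := mem_freeSumCubesProdCube.1 hx
  exact mem_Icc_neg_iff_forall_abs_le.2 fun i => (hx i).trans
    (forall_blockVec (Q := (· ≤ 1)) (by linarith) (by linarith) le_rfl i)

lemma freeSumCubesProdCube_mem_nhds_zero : freeSumCubesProdCube p q d ∈ nhds 0 := by
  have hhalf : Set.Icc (-fun _ => (1 / 2 : ℝ)) (fun _ => 1 / 2) ∈
      nhds (0 : Fin (p + q + d) → ℝ) :=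
    pi_Icc_mem_nhds (fun _ => by norm_num) fun _ => by norm_num
  refine Filter.mem_of_superset hhalf fun x hx => mem_freeSumCubesProdCube.2
    ⟨1 / 2, 1 / 2, by norm_num, by norm_num, by norm_num, fun i => ?_⟩
  exact (mem_Icc_neg_iff_forall_abs_le.1 hx i).trans
    (forall_blockVec (Q := (1 / 2 ≤ ·)) le_rfl le_rfl (by norm_num) i)

lemma mem_smul_freeSumCubesProdCube {r : ℝ} (hr : 0 < r) {x : Fin (p + q + d) → ℝ} :
    x ∈ r • freeSumCubesProdCube p q d ↔
      ∃ s t : ℝ, 0 ≤ s ∧ 0 ≤ t ∧ s + t = r ∧ ∀ i, |x i| ≤ blockVec p q d s t r i := by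
  have hscale (s t : ℝ) (i : Fin (p + q + d)) : |(r⁻¹ • x) i| ≤ blockVec p q d s t 1 i ↔
      |x i| ≤ blockVec p q d (r * s) (r * t) r i := by
    have hmul := map_blockVec (r * ·) s t 1 i
    rw [mul_one] at hmul
    rw [Pi.smul_apply, smul_eq_mul, abs_mul, abs_of_pos (inv_pos.2 hr), inv_mul_le_iff₀ hr, hmul]
  simp only [Set.mem_smul_set_iff_inv_smul_mem₀ hr.ne', mem_freeSumCubesProdCube, hscale]
  constructor
  · rintro ⟨s, t, hs, ht, hst, hx⟩
    exact ⟨r * s, r * t, by positivity, by positivity, by rw [← mul_add, hst, mul_one], hx⟩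
  · rintro ⟨s, t, hs, ht, hst, hx⟩
    refine ⟨s / r, t / r, by positivity, by positivity, by rw [← add_div, hst, div_self hr.ne'], ?_⟩
    rwa [mul_div_cancel₀ s hr.ne', mul_div_cancel₀ t hr.ne']

end Polytope

/-- The lattice points of the product of the cubes of half side lengths `a`, `b`, `c` in dimensions
`p`, `q`, `d`. -/
noncomputable def latticeBox (p q d a b c : ℕ) : Finset (Fin (p + q + d) → ℤ) :=
  Finset.Icc (-blockVec p q d (a : ℤ) b c) (blockVec p q d (a : ℤ) b c)

section Counting

variable {p q d : ℕ}

lemma mem_latticeBox {a b c : ℕ} {v : Fin (p + q + d) → ℤ} :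
    v ∈ latticeBox p q d a b c ↔
      (∀ i, |v (Fin.castAdd d (Fin.castAdd q i))| ≤ a) ∧
        (∀ j, |v (Fin.castAdd d (Fin.natAdd p j))| ≤ b) ∧ ∀ l, |v (Fin.natAdd (p + q) l)| ≤ c := by
  rw [latticeBox, ← Finset.mem_coe, Finset.coe_Icc, mem_Icc_neg_iff_forall_abs_le,
    forall_abs_le_blockVec_iff]

lemma card_latticeBox (a b c : ℕ) :
    (latticeBox p q d a b c).card = (2 * a + 1) ^ p * (2 * b + 1) ^ q * (2 * c + 1) ^ d := by
  have hcard := intCast_card_Icc_neg (r := blockVec p q d (a : ℤ) b c)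
    (forall_blockVec a.cast_nonneg b.cast_nonneg c.cast_nonneg)
  simp only [map_blockVec fun z : ℤ => 2 * z + 1, prod_blockVec] at hcard
  exact_mod_cast hcard

lemma latticeBox_inter_latticeBox (a b c a' b' c' : ℕ) :
    latticeBox p q d a b c ∩ latticeBox p q d a' b' c' =
      latticeBox p q d (min a a') (min b b') (min c c') := by
  ext v
  simp only [Finset.mem_inter, mem_latticeBox, Nat.cast_min, le_min_iff, forall_and]
  tauto

lemma latticeBox_mono {a b c a' b' c' : ℕ} (ha : a ≤ a') (hb : b ≤ b') (hc : c ≤ c') :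
    latticeBox p q d a b c ⊆ latticeBox p q d a' b' c' := by
  rw [← Finset.inter_eq_left, latticeBox_inter_latticeBox, min_eq_left ha, min_eq_left hb,
    min_eq_left hc]

lemma setOf_intCast_mem_smul_freeSumCubesProdCube {k : ℕ} (hk : 0 < k) :
    {v : Fin (p + q + d) → ℤ | (fun i => (v i : ℝ)) ∈ (k : ℝ) • freeSumCubesProdCube p q d} =
      (Finset.range (k + 1)).biUnion fun i => latticeBox p q d i (k - i) k := by
  ext v
  simp only [Set.mem_ofPred_eq, mem_smul_freeSumCubesProdCube (Nat.cast_pos.2 hk),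
    forall_abs_le_blockVec_iff, Finset.mem_coe, Finset.mem_biUnion, Finset.mem_range_succ_iff,
    mem_latticeBox]
  constructor
  · rintro ⟨s, t, hs, ht, hst, hp, hq, hd⟩
    have hsk : ⌊s⌋₊ ≤ k := Nat.floor_le_of_le (by linarith)
    have hsfloor : (⌊s⌋₊ : ℝ) ≤ s := Nat.floor_le hs
    refine ⟨⌊s⌋₊, hsk, fun i => ?_, fun j => ?_, fun l => by exact_mod_cast hd l⟩
    · rw [Int.natCast_floor_eq_floor hs]
      exact Int.le_floor.2 (by exact_mod_cast hp i)
    · have hj : (|v (Fin.castAdd d (Fin.natAdd p j))| : ℝ) ≤ k - ⌊s⌋₊ := by linarith [hq j]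
      rw [Nat.cast_sub hsk]
      exact_mod_cast hj
  · rintro ⟨i, hi, hp, hq, hd⟩
    refine ⟨i, (k - i : ℕ), by positivity, by positivity, by exact_mod_cast Nat.add_sub_of_le hi,
      fun _ => by exact_mod_cast hp _, fun _ => by exact_mod_cast hq _,
      fun _ => by exact_mod_cast hd _⟩

lemma latticePointCount_smul_freeSumCubesProdCube {k : ℕ} (hk : 0 < k) :
    (latticePointCount ((k : ℝ) • freeSumCubesProdCube p q d) : ℝ) =
      (∑ i ∈ Finset.range k,
          (2 * i + 1 : ℝ) ^ p * ((2 * (k - i) + 1) ^ q - (2 * (k - i) - 1) ^ q) +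
        (2 * k + 1) ^ p) * (2 * k + 1) ^ d := by
  have hcount := card_biUnion_range_succ_add_sum_card_inter
    (fun i => latticeBox p q d i (k - i) k) k fun i j l hij hjl _ => by
      rw [latticeBox_inter_latticeBox]
      exact latticeBox_mono (by lia) (by lia) (by lia)
  rw [← Nat.cast_inj (R := ℝ), Nat.cast_add] at hcount
  rw [latticePointCount, setOf_intCast_mem_smul_freeSumCubesProdCube hk, Set.ncard_coe_finset,
    eq_sub_of_add_eq hcount, Nat.cast_sum, Nat.cast_sum, Finset.sum_range_succ, add_sub_right_comm,
    ← Finset.sum_sub_distrib, add_mul, Finset.sum_mul]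
  simp only [latticeBox_inter_latticeBox, card_latticeBox]
  congr 1
  · refine Finset.sum_congr rfl fun i hi => ?_
    have hik : i + 1 ≤ k := Finset.mem_range.1 hi
    rw [min_eq_left i.le_succ, min_eq_right (by lia), min_self]
    push_cast [Nat.cast_sub hik, Nat.cast_sub (i.le_succ.trans hik)]
    ring
  · simp

end Counting

section EhrhartPolynomial

lemma sum_range_odd_pow_five (k : ℕ) :
    ∑ i ∈ Finset.range k, (2 * i + 1 : ℝ) ^ 5 = k ^ 2 * (16 * k ^ 4 - 20 * k ^ 2 + 7) / 3 := by
  induction k with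
  | zero => simp
  | succ k ih =>
    rw [Finset.sum_range_succ, ih]
    push_cast
    ring

lemma sum_range_odd_pow_five_mul_sub (k : ℕ) :
    ∑ i ∈ Finset.range k, (2 * i + 1 : ℝ) ^ 5 * (k - i) =
      16 / 21 * k ^ 7 + 8 / 3 * k ^ 6 + 4 / 3 * k ^ 5 - 10 / 3 * k ^ 4 - 7 / 3 * k ^ 3
        + 7 / 6 * k ^ 2 + 31 / 42 * k := by
  induction k with
  | zero => simp
  | succ k ih =>
    have hstep : ∑ i ∈ Finset.range (k + 1), (2 * i + 1 : ℝ) ^ 5 * ((k + 1 : ℕ) - i) =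
        ∑ i ∈ Finset.range k, (2 * i + 1 : ℝ) ^ 5 * (k - i) +
          ∑ i ∈ Finset.range (k + 1), (2 * i + 1 : ℝ) ^ 5 := by
      rw [Finset.sum_range_succ, Finset.sum_range_succ, ← add_assoc, ← Finset.sum_add_distrib]
      congr 1
      · exact Finset.sum_congr rfl fun i _ => by push_cast; ring
      · push_cast
        ring
    rw [hstep, ih, sum_range_odd_pow_five]
    push_cast
    ring

/-- The Ehrhart polynomial of the free sum `C₅ ⊕ C₂`. -/
noncomputable def ehrhartFreeSumCubes : ℝ[X] :=
  C (128 / 21) * X ^ 7 + C (64 / 3) * X ^ 6 + C (128 / 3) * X ^ 5 + C (160 / 3) * X ^ 4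
    + C (184 / 3) * X ^ 3 + C (148 / 3) * X ^ 2 + C (334 / 21) * X + 1

lemma isEhrhartPoly_freeSumCubesProdCube (d : ℕ) :
    IsEhrhartPoly (freeSumCubesProdCube 5 2 d) (ehrhartFreeSumCubes * (C 2 * X + 1) ^ d) := by
  intro k hk
  have hsquares (i : ℕ) :
      (2 * i + 1 : ℝ) ^ 5 * ((2 * (k - i) + 1) ^ 2 - (2 * (k - i) - 1) ^ 2) =
        8 * ((2 * i + 1) ^ 5 * (k - i)) := by
    ring
  rw [latticePointCount_smul_freeSumCubesProdCube hk]
  simp only [hsquares, ← Finset.mul_sum, sum_range_odd_pow_five_mul_sub]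
  simp only [ehrhartFreeSumCubes, eval_mul, eval_add, eval_pow, eval_C, eval_X, eval_one]
  ring

lemma coeff_one_ehrhartFreeSumCubes_mul_pow (d : ℕ) :
    (ehrhartFreeSumCubes * (C 2 * X + 1) ^ d).coeff 1 = 334 / 21 + 2 * (d : ℝ) := by
  have hderiv (L : ℝ[X]) : L.coeff 1 = (derivative L).eval 0 := by
    rw [← coeff_zero_eq_eval_zero, coeff_derivative]
    simp
  have hconst : ehrhartFreeSumCubes.eval 0 = 1 := by simp [ehrhartFreeSumCubes]
  have hlinear : (derivative ehrhartFreeSumCubes).eval 0 = 334 / 21 := by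
    simp [ehrhartFreeSumCubes]
  have hpow : (derivative ((C 2 * X + 1 : ℝ[X]) ^ d)).eval 0 = d * 2 := by simp [derivative_pow]
  rw [hderiv, derivative_mul, eval_add, eval_mul, eval_mul, hconst, hlinear, hpow]
  simp only [eval_pow, eval_add, eval_mul, eval_C, eval_X, eval_one, mul_zero, zero_add, one_pow]
  ring

end EhrhartPolynomial

theorem Wills_conjecture_fails (n : ℕ) (hn : 7 ≤ n) :
    ∃ P : Set (Fin n → ℝ), IsLatticePolytope P ∧ P = -P ∧
      {v : Fin n → ℤ | (fun i => (v i : ℝ)) ∈ interior P} = {0} ∧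
      ∃ L : Polynomial ℝ, IsEhrhartPoly P L ∧ 2 * (n : ℝ) < L.coeff 1 := by
  obtain ⟨d, rfl⟩ : ∃ d, n = 5 + 2 + d := Nat.exists_eq_add_of_le hn
  refine ⟨freeSumCubesProdCube 5 2 d, isLatticePolytope_freeSumCubesProdCube,
    neg_freeSumCubesProdCube.symm, ?_, _, isEhrhartPoly_freeSumCubesProdCube d, ?_⟩
  · exact setOf_intCast_mem_interior_eq_singleton_zero freeSumCubesProdCube_subset_Icc
      freeSumCubesProdCube_mem_nhds_zero
  · rw [coeff_one_ehrhartFreeSumCubes_mul_pow]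
    push_cast
    linarith
end

section
/- Let a > 0 be a real number and let P ⊂ ℝ^n be an n-dimensional lattice polytope such that all n complex roots of its Ehrhart polynomial L_P have real part equal to -1/a. Then for every pair of integers 0 ≤ s < t ≤ n with (s,t) ≠ (n-1,n), equality holds in ℓ_t(P)/ℓ_s(P) ≤ a^{t-s} binom(n,t)/binom(n,s) if and only if L_P(k) = (ak+1)^n for all positive integers k. -/
open MeasureTheory Polynomial Pointwise

/-!
Put `y = a * x + 1`, so that the roots of `L`, seen as a polynomial `p` in `y`, lie on the imaginary
axis. Then `p` is a constant times a product of factors `y` and `y ^ 2 + b` with `b > 0`, so all its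
coefficients have the same sign, and the coefficient of `x ^ s` in `L` is
`a ^ s * ∑ i, p.coeff i * i.choose s`. Since `i.choose t * n.choose s ≤ i.choose s * n.choose t`,
strictly for `i = n - 2`, equality of the ratios forces `p.coeff (n - 2) = 0`. Up to the leading
coefficient this is the sum of the numbers `b`, hence there are none and `L = c * (a * x + 1) ^ n`.

That `c = 1` is the constant term in Ehrhart's theorem. Translate a vertex to the origin, and write
each lattice point of the cone over the vertices as the nonnegative combination of them that is
least in a lexicographic order. The coefficient vectors so obtained are closed under passing to
smaller supports, so they split into a box point, with coordinates in `(0, 1]` on its support, and a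
vector of natural numbers supported there. For each of the finitely many box points the number of
its translates in the `k`-th dilate is a binomial coefficient, polynomial in `k` from `k = 0` on.
-/

/-! ### Polynomials with purely imaginary roots -/

section ImaginaryRoots

lemma mul_coeff_X_pow_mul_nonneg {R : Type*} [Semiring R] [Preorder R] {c : R} {q : R[X]}
    (h : ∀ i, 0 ≤ c * q.coeff i) (k i : ℕ) : 0 ≤ c * (X ^ k * q).coeff i := by
  rw [coeff_X_pow_mul']
  split_ifs
  · exact h _
  · simp

/-- All complex roots of the real polynomial `p` lie on the imaginary axis. Since every complex
number is a root of `0`, this forces `p ≠ 0`. -/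
def HasImaginaryRoots (p : ℝ[X]) : Prop :=
  ∀ z : ℂ, aeval z p = 0 → z.re = 0

namespace HasImaginaryRoots

variable {p q : ℝ[X]}

lemma ne_zero (hp : HasImaginaryRoots p) : p ≠ 0 := by
  rintro rfl
  simpa using hp 1 (map_zero _)

lemma of_dvd (hp : HasImaginaryRoots p) (hqp : q ∣ p) : HasImaginaryRoots q :=
  fun z hz => hp z (aeval_eq_zero_of_dvd_aeval_eq_zero hqp hz)

lemma X_dvd_or_X_sq_add_C_dvd (hp : HasImaginaryRoots p) (hdeg : p.natDegree ≠ 0) :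
    X ∣ p ∨ ∃ b > 0, X ^ 2 + C b ∣ p := by
  obtain ⟨z, hz⟩ : ∃ z : ℂ, aeval z p = 0 :=
    IsAlgClosed.exists_aeval_eq_zero ℂ p fun h => hdeg (natDegree_eq_of_degree_eq_some h)
  have hre : z.re = 0 := hp z hz
  by_cases him : z.im = 0
  · obtain rfl : z = 0 := Complex.ext hre him
    left
    simpa [X_dvd_iff, aeval_def, eval₂_at_zero] using hz
  · have hz0 : z ≠ 0 := fun h => him (by simp [h])
    refine Or.inr ⟨‖z‖ ^ 2, by positivity, ?_⟩
    simpa [hre] using quadratic_dvd_of_aeval_eq_zero_im_ne_zero p hz him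

theorem induction {motive : ℝ[X] → Prop} (hp : HasImaginaryRoots p)
    (const : ∀ c ≠ 0, motive (C c))
    (X_mul : ∀ q, HasImaginaryRoots q → motive q → motive (X * q))
    (X_sq_add_C_mul : ∀ b > 0, ∀ q, HasImaginaryRoots q → motive q →
      motive ((X ^ 2 + C b) * q)) :
    motive p := by
  induction hn : p.natDegree using Nat.strong_induction_on generalizing p with
  | _ n ih =>
  by_cases hdeg : p.natDegree = 0
  · obtain ⟨c, rfl⟩ := natDegree_eq_zero.1 hdeg
    exact const c fun hc => hp.ne_zero (by simp [hc])
  obtain ⟨q, rfl⟩ | ⟨b, hb, q, rfl⟩ := hp.X_dvd_or_X_sq_add_C_dvd hdeg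
  · have hq := hp.of_dvd (dvd_mul_left q X)
    rw [natDegree_X_mul hq.ne_zero] at hn
    exact X_mul q hq (ih _ (by lia) hq rfl)
  · have hq := hp.of_dvd (dvd_mul_left q _)
    rw [(monic_X_pow_add_C b two_ne_zero).natDegree_mul' hq.ne_zero, natDegree_X_pow_add_C] at hn
    exact X_sq_add_C_mul b hb q hq (ih _ (by lia) hq rfl)

theorem leadingCoeff_mul_coeff_nonneg (hp : HasImaginaryRoots p) (i : ℕ) :
    0 ≤ p.leadingCoeff * p.coeff i := by
  revert i
  refine hp.induction (motive := fun p => ∀ i, 0 ≤ p.leadingCoeff * p.coeff i)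
    (fun c _ i => ?_) (fun q _ ih i => ?_) (fun b hb q _ ih i => ?_)
  · rw [leadingCoeff_C, coeff_C]
    split_ifs
    · exact mul_self_nonneg c
    · simp
  · cases i with
    | zero => simp
    | succ i => simpa using ih i
  · have hlc : ((X ^ 2 + C b) * q).leadingCoeff = q.leadingCoeff := by
      simp [(monic_X_pow_add_C b two_ne_zero).leadingCoeff]
    have hX := mul_coeff_X_pow_mul_nonneg ih 2 i
    have hb' := mul_nonneg hb.le (ih i)
    rw [hlc, add_mul, coeff_add, coeff_C_mul]
    linarith

/-- In a factorization into `X` and quadratics `X ^ 2 + C b`, the second highest coefficient is a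
multiple of the sum of the numbers `b`, which vanishes only if there are no quadratics. -/
theorem eq_C_mul_X_pow (hp : HasImaginaryRoots p)
    (hcoeff : ∀ i, i + 2 = p.natDegree → p.coeff i = 0) :
    p = C p.leadingCoeff * X ^ p.natDegree := by
  revert hcoeff
  refine hp.induction (motive := fun p => (∀ i, i + 2 = p.natDegree → p.coeff i = 0) →
      p = C p.leadingCoeff * X ^ p.natDegree)
    (fun c _ _ => by simp) (fun q hq ih hcoeff => ?_) (fun b hb q hq _ hcoeff => ?_)
  · have hdeg := natDegree_X_mul hq.ne_zero
    have hq_eq := ih fun i hi => by simpa using hcoeff (i + 1) (by lia)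
    rw [hdeg, leadingCoeff_mul, leadingCoeff_X, one_mul, pow_succ', mul_left_comm, ← hq_eq]
  · have hdeg : ((X ^ 2 + C b) * q).natDegree = q.natDegree + 2 := by
      rw [(monic_X_pow_add_C b two_ne_zero).natDegree_mul' hq.ne_zero, natDegree_X_pow_add_C,
        add_comm]
    have hzero := hcoeff q.natDegree hdeg.symm
    rw [add_mul, coeff_add, coeff_C_mul, coeff_natDegree] at hzero
    have hX := mul_coeff_X_pow_mul_nonneg hq.leadingCoeff_mul_coeff_nonneg 2 q.natDegree
    have hlc : 0 < q.leadingCoeff ^ 2 := by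
      have := leadingCoeff_ne_zero.2 hq.ne_zero
      positivity
    have hX_neg : q.leadingCoeff * (X ^ 2 * q).coeff q.natDegree < 0 := by
      linear_combination q.leadingCoeff * hzero + mul_pos hb hlc
    exact absurd hX hX_neg.not_ge

end HasImaginaryRoots

end ImaginaryRoots

section Choose

variable {s t i n : ℕ}

lemma choose_mul_choose_mul_choose (hst : s ≤ t) :
    i.choose t * n.choose s * t.choose s
      = n.choose s * i.choose s * (i - s).choose (t - s) := by
  rw [mul_right_comm, Nat.choose_mul hst]
  ring

lemma choose_mul_choose_le (hst : s ≤ t) (hin : i ≤ n) :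
    i.choose t * n.choose s ≤ i.choose s * n.choose t := by
  refine Nat.le_of_mul_le_mul_right ?_ (Nat.choose_pos hst)
  rw [mul_comm (i.choose s), choose_mul_choose_mul_choose hst, choose_mul_choose_mul_choose hst,
    mul_comm (i.choose s)]
  gcongr

lemma choose_mul_choose_lt (hst : s < t) (htn : t ≤ n) (hsi : s ≤ i) (hin : i < n) :
    i.choose t * n.choose s < i.choose s * n.choose t := by
  have hlt : (i - s).choose (t - s) < (n - s).choose (t - s) := by
    obtain ⟨k, hk⟩ : ∃ k, t - s = k + 1 := ⟨t - s - 1, by lia⟩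
    obtain ⟨m, hm⟩ : ∃ m, n - s = m + 1 := ⟨n - s - 1, by lia⟩
    have hmono : (i - s).choose (k + 1) ≤ m.choose (k + 1) := Nat.choose_le_choose _ (by lia)
    have hpos : 0 < m.choose k := Nat.choose_pos (by lia)
    rw [hk, hm, Nat.choose_succ_succ']
    lia
  have hpos : 0 < n.choose s * i.choose s :=
    Nat.mul_pos (Nat.choose_pos (by lia)) (Nat.choose_pos hsi)
  refine Nat.lt_of_mul_lt_mul_right (a := t.choose s) ?_
  rw [mul_comm (i.choose s), choose_mul_choose_mul_choose hst.le,
    choose_mul_choose_mul_choose hst.le, mul_comm (i.choose s)]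
  gcongr

end Choose

section CoeffRatio

variable {R : Type*} [CommSemiring R]

lemma taylor_one_coeff (p : R[X]) (s : ℕ) :
    (taylor 1 p).coeff s = ∑ i ∈ Finset.range (p.natDegree + 1), p.coeff i * i.choose s := by
  rw [taylor_coeff, hasseDeriv_apply, sum_over_range _ (by simp), eval_finsetSum]
  simp [mul_comm]

lemma C_mul_X_add_one_pow_coeff (a : R) (n i : ℕ) :
    ((C a * X + 1) ^ n).coeff i = a ^ i * n.choose i := by
  have hcomp : (C a * X + 1) ^ n = ((X + 1) ^ n : R[X]).comp (C a * X) := by simp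
  rw [hcomp, comp_C_mul_X_coeff, coeff_X_add_one_pow, mul_comm]

lemma comp_C_mul_X_add_one_coeff (p : R[X]) (a : R) (i : ℕ) :
    (p.comp (C a * X + 1)).coeff i = a ^ i * (taylor 1 p).coeff i := by
  have hcomp : p.comp (C a * X + 1) = (taylor 1 p).comp (C a * X) := by
    simp [taylor_apply, comp_assoc]
  rw [hcomp, comp_C_mul_X_coeff, mul_comm]

variable {p L : ℝ[X]} {a : ℝ} {s t : ℕ}

/-- The coefficient of `X ^ (natDegree - 2)` enters the difference of the two sides of `heq` with a
nonzero factor, and no coefficient enters it with the opposite sign. -/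
theorem HasImaginaryRoots.eq_C_mul_X_pow_of_taylor_coeff (hp : HasImaginaryRoots p) (hst : s < t)
    (ht : t ≤ p.natDegree) (hne : ¬(s = p.natDegree - 1 ∧ t = p.natDegree))
    (heq : (taylor 1 p).coeff t * p.natDegree.choose s
      = (taylor 1 p).coeff s * p.natDegree.choose t) :
    p = C p.leadingCoeff * X ^ p.natDegree := by
  set n := p.natDegree
  let gap (i : ℕ) : ℝ := i.choose s * n.choose t - i.choose t * n.choose s
  have hsum : ∑ i ∈ Finset.range (n + 1), p.leadingCoeff * p.coeff i * gap i = 0 := by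
    rw [taylor_one_coeff, taylor_one_coeff, Finset.sum_mul, Finset.sum_mul, ← sub_eq_zero,
      ← Finset.sum_sub_distrib] at heq
    rw [← mul_zero (-p.leadingCoeff), ← heq, Finset.mul_sum]
    exact Finset.sum_congr rfl fun i _ => by ring
  have hgap_nonneg (i : ℕ) (hi : i ∈ Finset.range (n + 1)) :
      0 ≤ p.leadingCoeff * p.coeff i * gap i := by
    refine mul_nonneg (hp.leadingCoeff_mul_coeff_nonneg i) (sub_nonneg.2 ?_)
    exact_mod_cast choose_mul_choose_le hst.le (Finset.mem_range_succ_iff.1 hi)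
  refine hp.eq_C_mul_X_pow fun i hi => ?_
  have hzero := (Finset.sum_eq_zero_iff_of_nonneg hgap_nonneg).1 hsum i
    (Finset.mem_range_succ_iff.2 (by lia))
  have hgap_pos : 0 < gap i := by
    refine sub_pos.2 ?_
    exact_mod_cast choose_mul_choose_lt hst ht (by lia) (by lia)
  simpa [hgap_pos.ne', hp.ne_zero] using hzero

lemma exists_hasImaginaryRoots_comp_eq (ha : a ≠ 0) (hL : L ≠ 0)
    (hroots : ∀ z ∈ (L.map (algebraMap ℝ ℂ)).roots, z.re = -1 / a) :
    ∃ p : ℝ[X], HasImaginaryRoots p ∧ p.natDegree = L.natDegree ∧ p.comp (C a * X + 1) = L := by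
  refine ⟨L.comp (C a⁻¹ * (X - 1)), fun z hz => ?_, ?_, ?_⟩
  · have hre := hroots ((a⁻¹ : ℝ) * (z - 1)) <| (mem_roots (Polynomial.map_ne_zero hL)).2 <| by
      rw [IsRoot.def, eval_map_algebraMap]
      simpa [aeval_comp] using hz
    rw [Complex.re_ofReal_mul, Complex.sub_re, Complex.one_re] at hre
    field_simp at hre
    linarith
  · rw [natDegree_comp, natDegree_C_mul (inv_ne_zero ha), ← C_1, natDegree_X_sub_C, mul_one]
  · simp [comp_assoc, ← mul_assoc, ← C_mul, ha]

lemma eq_C_mul_of_coeff_div_coeff_eq (ha : a ≠ 0)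
    (hroots : ∀ z ∈ (L.map (algebraMap ℝ ℂ)).roots, z.re = -1 / a)
    (hst : s < t) (ht : t ≤ L.natDegree) (hne : ¬(s = L.natDegree - 1 ∧ t = L.natDegree))
    (heq : L.coeff t / L.coeff s
      = a ^ (t - s) * L.natDegree.choose t / L.natDegree.choose s) :
    L = C (L.coeff 0) * (C a * X + 1) ^ L.natDegree := by
  have hL : L ≠ 0 := ne_zero_of_natDegree_gt (hst.trans_le ht)
  obtain ⟨p, hp, hdeg, hpL⟩ := exists_hasImaginaryRoots_comp_eq ha hL hroots
  rw [← hdeg] at ht hne heq ⊢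
  have hs0 : (p.natDegree.choose s : ℝ) ≠ 0 := by exact_mod_cast (Nat.choose_pos (by lia)).ne'
  have ht0 : (p.natDegree.choose t : ℝ) ≠ 0 := by exact_mod_cast (Nat.choose_pos ht).ne'
  have hLs : L.coeff s ≠ 0 := by
    intro h
    rw [h, div_zero] at heq
    exact div_ne_zero (mul_ne_zero (pow_ne_zero _ ha) ht0) hs0 heq.symm
  have htaylor : (taylor 1 p).coeff t * p.natDegree.choose s
      = (taylor 1 p).coeff s * p.natDegree.choose t := by
    rw [div_eq_div_iff hLs hs0, ← hpL, comp_C_mul_X_add_one_coeff, comp_C_mul_X_add_one_coeff,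
      ← Nat.sub_add_cancel hst.le, pow_add, Nat.sub_add_cancel hst.le] at heq
    refine mul_left_cancel₀ (mul_ne_zero (pow_ne_zero (t - s) ha) (pow_ne_zero s ha)) ?_
    linear_combination heq
  have hp_eq := hp.eq_C_mul_X_pow_of_taylor_coeff hst ht hne htaylor
  have hL_eq : L = C p.leadingCoeff * (C a * X + 1) ^ p.natDegree := by
    rw [← hpL]
    conv_lhs => rw [hp_eq]
    simp
  have hlc : L.coeff 0 = p.leadingCoeff := by
    rw [hL_eq, coeff_C_mul, C_mul_X_add_one_pow_coeff]
    simp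
  rwa [hlc]

theorem coeff_div_coeff_eq_iff (ha : a ≠ 0)
    (hroots : ∀ z ∈ (L.map (algebraMap ℝ ℂ)).roots, z.re = -1 / a)
    (hst : s < t) (ht : t ≤ L.natDegree) (hne : ¬(s = L.natDegree - 1 ∧ t = L.natDegree)) :
    L.coeff t / L.coeff s = a ^ (t - s) * L.natDegree.choose t / L.natDegree.choose s ↔
      L = C (L.coeff 0) * (C a * X + 1) ^ L.natDegree := by
  have hL : L ≠ 0 := ne_zero_of_natDegree_gt (hst.trans_le ht)
  refine ⟨eq_C_mul_of_coeff_div_coeff_eq ha hroots hst ht hne, fun hL_eq => ?_⟩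
  have hL0 : L.coeff 0 ≠ 0 := fun h => hL (by simpa [h] using hL_eq)
  have hcoeff (i : ℕ) : L.coeff i = L.coeff 0 * (a ^ i * L.natDegree.choose i) := by
    conv_lhs => rw [hL_eq, coeff_C_mul, C_mul_X_add_one_pow_coeff]
  rw [hcoeff t, hcoeff s, mul_div_mul_left _ _ hL0, mul_div_mul_comm, mul_div_assoc,
    pow_sub₀ a ha hst.le, div_eq_mul_inv (a ^ t)]

end CoeffRatio

/-! ### Lexicographically least nonnegative combinations -/

section LexMin

lemma exists_forall_toLex_le {X β : Type*} [TopologicalSpace X] [LinearOrder β]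
    [TopologicalSpace β] [OrderClosedTopology β] {m : ℕ} {K : Set X} (hK : IsCompact K)
    (hne : K.Nonempty) {f : X → Fin m → β} (hf : Continuous f) :
    ∃ x ∈ K, ∀ y ∈ K, toLex (f x) ≤ toLex (f y) := by
  induction m generalizing K with
  | zero => exact ⟨hne.some, hne.some_mem, fun y _ => (Subsingleton.elim _ _).le⟩
  | succ m ih =>
    have hf0 : Continuous fun x => f x 0 := by fun_prop
    obtain ⟨x₀, hx₀, hmin⟩ := hK.exists_isMinOn hne hf0.continuousOn
    obtain ⟨x, ⟨hxK, hx⟩, hxmin⟩ := ih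
      (hK.inter_right (isClosed_eq hf0 (continuous_const (y := f x₀ 0)))) ⟨x₀, hx₀, rfl⟩
      (f := fun x => Fin.tail (f x)) (by unfold Fin.tail; fun_prop)
    refine ⟨x, hxK, fun y hy => ?_⟩
    obtain hlt | heq := (hx.trans_le (hmin hy) : f x 0 ≤ f y 0).lt_or_eq
    · exact le_of_lt ⟨0, by simp, hlt⟩
    obtain htail | ⟨i, hi, hlt⟩ := (hxmin y ⟨hy, heq.symm.trans hx⟩).eq_or_lt
    · refine le_of_eq (congrArg toLex ?_)
      rw [← Fin.cons_self_tail (f x), ← Fin.cons_self_tail (f y), heq]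
      exact congrArg _ (toLex_inj.1 htail)
    · refine le_of_lt ⟨i.succ, fun j hj => ?_, hlt⟩
      cases j using Fin.cases with
      | zero => exact heq
      | succ j => exact hi j (Fin.succ_lt_succ_iff.1 hj)

lemma toLex_add_smul_sub_lt {ι 𝕜 : Type*} [LinearOrder ι] [Field 𝕜] [LinearOrder 𝕜]
    [IsStrictOrderedRing 𝕜] {u u' : ι → 𝕜} (h : toLex u' < toLex u) {ε : 𝕜} (hε : 0 < ε)
    (w : ι → 𝕜) : toLex (w + ε • (u' - u)) < toLex w := by
  obtain ⟨i, hi, hlt⟩ := h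
  refine ⟨i, fun j hj => ?_, ?_⟩
  · change w j + ε * (u' j - u j) = w j
    rw [show u' j = u j from hi j hj, sub_self, mul_zero, add_zero]
  · exact add_lt_of_neg_right _ (mul_neg_of_pos_of_neg hε (sub_neg.2 hlt))

variable {m : ℕ}

/-- The coordinate vector preceded by its sum. Comparing keys lexicographically is the total order
on coefficient vectors in which we minimize. -/
def sumCons : (Fin m → ℝ) →ₗ[ℝ] Fin (m + 1) → ℝ where
  toFun w := Fin.cons (∑ i, w i) w
  map_add' w u := by ext i; cases i using Fin.cases <;> simp [Finset.sum_add_distrib]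
  map_smul' c w := by ext i; cases i using Fin.cases <;> simp [Finset.mul_sum]

lemma sumCons_injective : Function.Injective (sumCons (m := m)) :=
  fun _ _ h => congrArg Fin.tail h

lemma exists_pos_smul_le {ι : Type*} [Finite ι] {u w : ι → ℝ} (hw : 0 ≤ w)
    (hsupp : ∀ i, w i = 0 → u i = 0) : ∃ ε : ℝ, 0 < ε ∧ ε • u ≤ w := by
  have hev (i : ι) : ∀ᶠ ε in nhdsWithin (0 : ℝ) (Set.Ioi 0), ε * u i ≤ w i := by
    obtain h | h := (hw i).eq_or_lt
    · have hi : w i = 0 := h.symm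
      simp [hsupp i hi, hi]
    · have hlim : Filter.Tendsto (fun ε : ℝ => ε * u i) (nhdsWithin 0 (Set.Ioi 0)) (nhds 0) := by
        simpa using (Continuous.tendsto (f := fun ε : ℝ => ε * u i) (by fun_prop) 0).mono_left
          nhdsWithin_le_nhds
      exact hlim.eventually_le_const h
  obtain ⟨ε, hle, hε⟩ := ((Filter.eventually_all.2 hev).and self_mem_nhdsWithin).exists
  exact ⟨ε, hε, hle⟩

variable {E : Type*} [AddCommGroup E] [Module ℝ E] (v : Fin m → E)

/-- The nonnegative coefficient vectors `w` whose `sumCons` is lexicographically least among all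
nonnegative vectors with the same combination `∑ i, w i • v i`. Their supports are the simplices of
a triangulation of the cone generated by `v`. -/
def leastCoeffs : Set (Fin m → ℝ) :=
  {w | 0 ≤ w ∧ ∀ u, 0 ≤ u → Fintype.linearCombination ℝ v u = Fintype.linearCombination ℝ v w →
    toLex (sumCons w) ≤ toLex (sumCons u)}

variable {v} {u w : Fin m → ℝ}

lemma injOn_leastCoeffs : Set.InjOn (Fintype.linearCombination ℝ v) (leastCoeffs v) :=
  fun w hw u hu h => sumCons_injective <| toLex_inj.1 <|
    (hw.2 u hu.1 h.symm).antisymm (hu.2 w hw.1 h)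

/-- If `u` could be improved to `u'`, then `w + ε • (u' - u)` would improve `w`. -/
lemma mem_leastCoeffs_of_support (hw : w ∈ leastCoeffs v) (hu : 0 ≤ u)
    (hsupp : ∀ i, w i = 0 → u i = 0) : u ∈ leastCoeffs v := by
  refine ⟨hu, fun u' hu' h => le_of_not_gt fun hlt => ?_⟩
  obtain ⟨ε, hε, hle⟩ := exists_pos_smul_le hw.1 hsupp
  refine (hw.2 (w + ε • (u' - u)) ?_ (by simp [h])).not_gt ?_
  · rw [smul_sub, add_sub, add_sub_right_comm]
    exact add_nonneg (sub_nonneg.2 hle) (smul_nonneg hε.le hu')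
  · rw [map_add, map_smul, map_sub]
    exact toLex_add_smul_sub_lt hlt hε (sumCons w)

variable [TopologicalSpace E] [IsTopologicalAddGroup E] [ContinuousSMul ℝ E] [T2Space E]

lemma exists_mem_leastCoeffs (hw : 0 ≤ w) :
    ∃ u ∈ leastCoeffs v,
      Fintype.linearCombination ℝ v u = Fintype.linearCombination ℝ v w ∧ ∑ i, u i ≤ ∑ i, w i := by
  set φ := Fintype.linearCombination ℝ v
  let K : Set (Fin m → ℝ) := Set.Ici 0 ∩ ({u | ∑ i, u i ≤ ∑ i, w i} ∩ {u | φ u = φ w})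
  have hK : IsCompact K := by
    refine (isCompact_Icc (a := 0) (b := fun _ => ∑ i, w i)).of_isClosed_subset ?_ ?_
    · exact isClosed_Ici.inter <|
        (isClosed_le (by fun_prop) continuous_const).inter <|
        isClosed_eq φ.continuous_of_finiteDimensional continuous_const
    · exact fun u hu => ⟨hu.1, fun i =>
        (Finset.single_le_sum (fun j _ => hu.1 j) (Finset.mem_univ i)).trans hu.2.1⟩
  obtain ⟨u, ⟨hu, hsum, hφ⟩, hmin⟩ := exists_forall_toLex_le hK ⟨w, hw, le_refl (∑ i, w i), rfl⟩
    (sumCons (m := m)).continuous_of_finiteDimensional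
  refine ⟨u, ⟨hu, fun u' hu' h => ?_⟩, hφ, hsum⟩
  obtain hle | hlt := le_or_gt (∑ i, u' i) (∑ i, w i)
  · exact hmin u' ⟨hu', hle, h.trans hφ⟩
  · exact le_of_lt ⟨0, by simp, hsum.trans_lt hlt⟩

end LexMin

/-! ### Lattice points in dilates of a lattice polytope -/

section Counting

lemma ncard_setOf_sum_le {ι : Type*} [Fintype ι] (s : Finset ι) (N : ℕ) :
    {c : ι → ℕ | (∀ i ∉ s, c i = 0) ∧ ∑ i, c i ≤ N}.ncard = (N + s.card).choose s.card := by
  classical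
  have hset : {c : ι → ℕ | (∀ i ∉ s, c i = 0) ∧ ∑ i, c i ≤ N} =
      (⇑) '' (((Finset.range (N + 1)).biUnion s.finsuppAntidiag : Finset (ι →₀ ℕ)) :
        Set (ι →₀ ℕ)) := by
    ext c
    have hsum (hc : ∀ i ∉ s, c i = 0) : s.sum c = ∑ i, c i :=
      Finset.sum_subset s.subset_univ fun i _ hi => hc i hi
    refine ⟨fun ⟨hc, hle⟩ => ⟨Finsupp.equivFunOnFinite.symm c, ?_, rfl⟩, ?_⟩
    · simpa [Finset.subset_iff, not_imp_comm, hsum hc, Nat.lt_succ_iff] using ⟨hle, hc⟩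
    · rintro ⟨f, hf, rfl⟩
      simp only [Finset.coe_biUnion, Set.mem_iUnion, Finset.mem_coe, Finset.mem_range,
        Finset.mem_finsuppAntidiag] at hf
      obtain ⟨n, hn, hfs, hsupp⟩ := hf
      have hf0 : ∀ i ∉ s, f i = 0 := fun i hi => Finsupp.notMem_support_iff.1 fun h => hi (hsupp h)
      exact ⟨hf0, by rw [← hsum hf0]; lia⟩
  have hdisj : (Finset.range (N + 1) : Set ℕ).PairwiseDisjoint s.finsuppAntidiag := by
    refine fun a _ b _ hab => Finset.disjoint_left.2 fun f hfa hfb => hab ?_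
    exact (Finset.mem_finsuppAntidiag.1 hfa).1.symm.trans (Finset.mem_finsuppAntidiag.1 hfb).1
  rw [hset, Set.ncard_image_of_injective _ DFunLike.coe_injective, Set.ncard_coe_finset,
    Finset.card_biUnion hdisj]
  simp_rw [Finset.card_finsuppAntidiag_nat_eq_multichoose, Nat.sum_range_multichoose]

lemma exists_polynomial_eval_eq_choose (K : Type*) [Field K] [CharZero K] (d r : ℕ) :
    ∃ q : K[X], ∀ k : ℕ, q.eval (k : K) = (k + d).choose r := by
  refine ⟨C (r.factorial : K)⁻¹ * (descPochhammer K r).comp (X + C (d : K)), fun k => ?_⟩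
  have hr : (r.factorial : K) ≠ 0 := Nat.cast_ne_zero.2 r.factorial_ne_zero
  rw [eval_mul, eval_C, eval_comp, eval_add, eval_X, eval_C, ← Nat.cast_add,
    descPochhammer_eval_eq_descFactorial, Nat.descFactorial_eq_factorial_mul_choose, Nat.cast_mul,
    inv_mul_cancel_left₀ hr]

end Counting

section FractionalPart

/-- The greatest natural number less than `x`, or `0` if there is none, so that for `0 < x` the
difference lies in `(0, 1]`. -/
noncomputable def predCeil (x : ℝ) : ℕ := ⌈x - 1⌉₊

variable {x b : ℝ} {c : ℕ}

lemma sub_predCeil_le_one (x : ℝ) : x - predCeil x ≤ 1 := by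
  have := Nat.le_ceil (x - 1)
  rw [predCeil]
  linarith

lemma predCeil_zero : predCeil 0 = 0 := by simp [predCeil]

lemma predCeil_lt (hx : 0 < x) : (predCeil x : ℝ) < x := by
  obtain hx1 | hx1 := le_total x 1
  · rwa [predCeil, Nat.ceil_eq_zero.2 (sub_nonpos.2 hx1), Nat.cast_zero]
  · rw [predCeil]
    linarith [Nat.ceil_lt_add_one (sub_nonneg.2 hx1)]

lemma predCeil_le (hx : 0 ≤ x) : (predCeil x : ℝ) ≤ x := by
  obtain rfl | hx := hx.eq_or_lt
  · simp [predCeil_zero]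
  · exact (predCeil_lt hx).le

lemma predCeil_add_natCast (hb : 0 ≤ b) (hb1 : b ≤ 1) (hc : b = 0 → c = 0) :
    predCeil (b + c) = c := by
  obtain hb | hb := hb.eq_or_lt
  · rw [← hb, hc hb.symm, Nat.cast_zero, add_zero, predCeil_zero]
  refine (Nat.ceil_le.2 (by linarith)).antisymm ?_
  have hle : b + c - 1 ≤ predCeil (b + c) := Nat.le_ceil _
  have hlt : (c : ℝ) < predCeil (b + c) + 1 := by linarith
  exact Nat.lt_succ_iff.1 (by exact_mod_cast hlt)

end FractionalPart

section LatticeLevel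

lemma finite_inter_of_isCompact {E : Type*} [AddCommGroup E] [TopologicalSpace E]
    [IsTopologicalAddGroup E] [T2Space E] {K : Set E} (hK : IsCompact K) (Λ : AddSubgroup E)
    [DiscreteTopology Λ] :
    (K ∩ Λ).Finite :=
  (hK.inter_right Λ.isClosed_of_discrete).finite <|
    IsDiscrete.mono ⟨‹DiscreteTopology Λ›⟩ Set.inter_subset_right

variable {E : Type*} [AddCommGroup E] [Module ℝ E] {m : ℕ} {v : Fin m → E}

lemma convexHull_range_eq_image_stdSimplex :
    convexHull ℝ (Set.range v) = Fintype.linearCombination ℝ v '' stdSimplex ℝ (Fin m) := by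
  rw [← convexHull_rangle_single_eq_stdSimplex, LinearMap.image_convexHull, ← Set.range_comp]
  congr! 2
  ext i
  simp

lemma smul_convexHull_range_eq_image {i₀ : Fin m} (hi₀ : v i₀ = 0) {k : ℝ} (hk : 0 ≤ k) :
    k • convexHull ℝ (Set.range v)
      = Fintype.linearCombination ℝ v '' {w | 0 ≤ w ∧ ∑ i, w i ≤ k} := by
  obtain rfl | hk := hk.eq_or_lt
  · have hzero : {w : Fin m → ℝ | 0 ≤ w ∧ ∑ i, w i ≤ 0} = {0} := by
      ext w
      refine ⟨fun ⟨hw, hsum⟩ => ?_, by rintro rfl; simp⟩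
      exact (Fintype.sum_eq_zero_iff_of_nonneg hw).1 (hsum.antisymm (Fintype.sum_nonneg hw))
    have hne : (convexHull ℝ (Set.range v)).Nonempty := convexHull_nonempty_iff.2 ⟨0, i₀, hi₀⟩
    rw [hzero, Set.zero_smul_set hne, Set.image_singleton, map_zero, Set.singleton_zero]
  rw [convexHull_range_eq_image_stdSimplex, ← image_smul_set]
  refine Set.Subset.antisymm (Set.image_mono ?_) ?_
  · rintro _ ⟨w, ⟨hw, hsum⟩, rfl⟩
    refine ⟨smul_nonneg hk.le hw, ?_⟩
    simp [← Finset.mul_sum, hsum]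
  · rintro _ ⟨w, ⟨hw, hsum⟩, rfl⟩
    set u := w + Pi.single i₀ (k - ∑ i, w i)
    have hu : 0 ≤ u := add_nonneg hw (Pi.single_nonneg.2 (sub_nonneg.2 hsum))
    refine ⟨u, Set.mem_smul_set.2 ⟨k⁻¹ • u, ⟨smul_nonneg (inv_nonneg.2 hk.le) hu, ?_⟩, ?_⟩, ?_⟩
    · simp [u, ← Finset.mul_sum, Finset.sum_add_distrib, hk.ne']
    · rw [smul_inv_smul₀ hk.ne']
    · simp [u, hi₀]

variable (v) (Λ : AddSubgroup E)

/-- The least coefficient vectors of the points of `Λ` in the `k`-th dilate of the convex hull of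
`0` and the `v i`. -/
def latticeLevel (k : ℕ) : Set (Fin m → ℝ) :=
  {w | w ∈ leastCoeffs v ∧ Fintype.linearCombination ℝ v w ∈ Λ ∧ ∑ i, w i ≤ k}

/-- The least coefficient vectors of the points of `Λ` all of whose coordinates are at most `1`.
Each of them is a lattice point of the half-open parallelepiped spanned by the `v i` with
`b i ≠ 0`. -/
def boxPoints : Set (Fin m → ℝ) :=
  {b | b ∈ leastCoeffs v ∧ Fintype.linearCombination ℝ v b ∈ Λ ∧ ∀ i, b i ≤ 1}

variable {v Λ}

lemma image_latticeLevel [TopologicalSpace E] [IsTopologicalAddGroup E] [ContinuousSMul ℝ E]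
    [T2Space E] {i₀ : Fin m} (hi₀ : v i₀ = 0) (k : ℕ) :
    Fintype.linearCombination ℝ v '' latticeLevel v Λ k
      = (k : ℝ) • convexHull ℝ (Set.range v) ∩ Λ := by
  rw [smul_convexHull_range_eq_image hi₀ k.cast_nonneg]
  ext x
  constructor
  · rintro ⟨w, ⟨hw, hΛ, hsum⟩, rfl⟩
    exact ⟨⟨w, ⟨hw.1, hsum⟩, rfl⟩, hΛ⟩
  · rintro ⟨⟨w, ⟨hw, hsum⟩, rfl⟩, hΛ⟩
    obtain ⟨u, hu, hφ, hle⟩ := exists_mem_leastCoeffs (v := v) hw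
    exact ⟨u, ⟨hu, hφ.symm ▸ hΛ, hle.trans hsum⟩, hφ⟩

lemma injOn_latticeLevel (k : ℕ) :
    Set.InjOn (Fintype.linearCombination ℝ v) (latticeLevel v Λ k) :=
  injOn_leastCoeffs.mono fun _ hw => hw.1

lemma finite_latticeLevel [TopologicalSpace E] [IsTopologicalAddGroup E] [ContinuousSMul ℝ E]
    [T2Space E] [DiscreteTopology Λ] {i₀ : Fin m} (hi₀ : v i₀ = 0) (k : ℕ) :
    (latticeLevel v Λ k).Finite := by
  refine Set.Finite.of_finite_image ?_ (injOn_latticeLevel k)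
  rw [image_latticeLevel hi₀]
  have hconv := (Set.finite_range v).isCompact_convexHull (𝕜 := ℝ)
  exact finite_inter_of_isCompact (hconv.smul _) Λ

lemma boxPoints_subset_latticeLevel : boxPoints v Λ ⊆ latticeLevel v Λ m :=
  fun b ⟨hb, hΛ, hb1⟩ => ⟨hb, hΛ, (Finset.sum_le_sum fun i _ => hb1 i).trans (by simp)⟩

lemma linearCombination_natCast_mem (hv : ∀ i, v i ∈ Λ) (c : Fin m → ℕ) :
    Fintype.linearCombination ℝ v (fun i => (c i : ℝ)) ∈ Λ := by
  simp only [Fintype.linearCombination_apply, Nat.cast_smul_eq_nsmul]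
  exact sum_mem fun i _ => nsmul_mem (hv i) _

lemma sub_predCeil_mem_boxPoints (hv : ∀ i, v i ∈ Λ) {k : ℕ} {w : Fin m → ℝ}
    (hw : w ∈ latticeLevel v Λ k) : (fun i => w i - predCeil (w i)) ∈ boxPoints v Λ := by
  refine ⟨mem_leastCoeffs_of_support hw.1 (fun i => ?_) fun i hi => ?_, ?_,
    fun i => sub_predCeil_le_one _⟩
  · exact sub_nonneg.2 (predCeil_le (hw.1.1 i))
  · simp [hi, predCeil_zero]
  · have := sub_mem hw.2.1 (linearCombination_natCast_mem hv fun i => predCeil (w i))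
    rwa [← map_sub] at this

lemma latticeLevel_fiber_eq_image (hv : ∀ i, v i ∈ Λ) {b : Fin m → ℝ} (hb : b ∈ boxPoints v Λ)
    (k : ℕ) :
    {w ∈ latticeLevel v Λ k | (fun i => w i - (predCeil (w i) : ℝ)) = b}
      = (fun (c : Fin m → ℕ) i => b i + c i) ''
        {c | (∀ i, b i = 0 → c i = 0) ∧ ∑ i, c i + ⌈∑ i, b i⌉₊ ≤ k} := by
  have hsum (c : Fin m → ℕ) :
      ∑ i, (b i + c i) ≤ k ↔ ∑ i, c i + ⌈∑ i, b i⌉₊ ≤ k := by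
    rw [Finset.sum_add_distrib, ← Nat.cast_sum, ← Nat.ceil_le,
      Nat.ceil_add_natCast (Finset.sum_nonneg fun i _ => hb.1.1 i), add_comm]
  ext w
  constructor
  · rintro ⟨hw, rfl⟩
    refine ⟨fun i => predCeil (w i), ⟨fun i hi => ?_, (hsum _).1 (by simpa using hw.2.2)⟩,
      by simp⟩
    obtain hi0 | hi0 := (hw.1.1 i).eq_or_lt
    · simp [← hi0, predCeil_zero]
    · exact absurd (sub_eq_zero.1 hi) (predCeil_lt hi0).ne'
  · rintro ⟨c, ⟨hc, hle⟩, rfl⟩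
    refine ⟨⟨mem_leastCoeffs_of_support hb.1 ?_ ?_, ?_, (hsum c).2 hle⟩, ?_⟩
    · exact add_nonneg hb.1.1 fun i => (c i).cast_nonneg
    · intro i hi
      simp [hi, hc i hi]
    · have := add_mem hb.2.1 (linearCombination_natCast_mem hv c)
      rwa [← map_add] at this
    · ext i
      simp [predCeil_add_natCast (hb.1.1 i) (hb.2.2 i) (hc i)]

end LatticeLevel

section EhrhartPolynomial

lemma ncard_eq_sum_ncard_fiber {α β : Type*} {s : Set α} (hs : s.Finite) {t : Finset β} {f : α → β}
    (hf : Set.MapsTo f s t) : s.ncard = ∑ b ∈ t, {a ∈ s | f a = b}.ncard := by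
  classical
  lift s to Finset α using hs
  rw [Set.ncard_coe_finset, Finset.card_eq_sum_card_fiberwise hf]
  simp [← Set.ncard_coe_finset]

variable {E : Type*} [AddCommGroup E] [Module ℝ E] {m : ℕ} {v : Fin m → E} {Λ : AddSubgroup E}

lemma ceil_sum_le_card_support {b : Fin m → ℝ} (hb : ∀ i, b i ≤ 1) :
    ⌈∑ i, b i⌉₊ ≤ (Finset.univ.filter (b · ≠ 0)).card := by
  rw [Nat.ceil_le, ← Finset.sum_filter_ne_zero]
  simpa using Finset.sum_le_card_nsmul (Finset.univ.filter (b · ≠ 0)) b 1 fun i _ => hb i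

/-- The height of a box point is at most the size of its support, so the truncated subtraction is
exact and the formula also holds when the fiber is empty, in particular at `k = 0`. -/
lemma ncard_latticeLevel_fiber (hv : ∀ i, v i ∈ Λ) {b : Fin m → ℝ} (hb : b ∈ boxPoints v Λ)
    (k : ℕ) :
    {w ∈ latticeLevel v Λ k | (fun i => w i - (predCeil (w i) : ℝ)) = b}.ncard
      = (k + ((Finset.univ.filter (b · ≠ 0)).card - ⌈∑ i, b i⌉₊)).choose
          (Finset.univ.filter (b · ≠ 0)).card := by
  have hle := ceil_sum_le_card_support hb.2.2
  set s := Finset.univ.filter (b · ≠ 0) with hs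
  set h := ⌈∑ i, b i⌉₊
  have hinj : Function.Injective fun (c : Fin m → ℕ) i => b i + c i := fun c c' hcc => by
    ext i
    simpa using congrFun hcc i
  rw [latticeLevel_fiber_eq_image hv hb, Set.ncard_image_of_injective _ hinj]
  obtain hk | hk := lt_or_ge k h
  · rw [Nat.choose_eq_zero_of_lt (by lia), ← Set.ncard_empty (Fin m → ℕ)]
    congr 1
    exact Set.eq_empty_of_forall_notMem fun c hc => hk.not_ge ((Nat.le_add_left _ _).trans hc.2)
  · rw [show k + (s.card - h) = k - h + s.card by lia, ← ncard_setOf_sum_le]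
    congr! 4 with c
    · simp [hs]
    · lia

variable [TopologicalSpace E] [IsTopologicalAddGroup E] [ContinuousSMul ℝ E] [T2Space E]
  [DiscreteTopology Λ]

lemma exists_polynomial_eval_eq_ncard_of_zero_mem_range (hv : ∀ i, v i ∈ Λ) {i₀ : Fin m}
    (hi₀ : v i₀ = 0) :
    ∃ q : ℝ[X], ∀ k : ℕ,
      q.eval (k : ℝ) = ((k : ℝ) • convexHull ℝ (Set.range v) ∩ Λ).ncard := by
  have hfin : (boxPoints v Λ).Finite :=
    (finite_latticeLevel hi₀ m).subset boxPoints_subset_latticeLevel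
  choose q hq using exists_polynomial_eval_eq_choose ℝ
  refine ⟨∑ b ∈ hfin.toFinset, q ((Finset.univ.filter (b · ≠ 0)).card - ⌈∑ i, b i⌉₊)
    (Finset.univ.filter (b · ≠ 0)).card, fun k => ?_⟩
  have hmaps : Set.MapsTo (fun w i => w i - (predCeil (w i) : ℝ)) (latticeLevel v Λ k)
      hfin.toFinset := fun w hw => by simpa using sub_predCeil_mem_boxPoints hv hw
  rw [← image_latticeLevel hi₀, (injOn_latticeLevel k).ncard_image,
    ncard_eq_sum_ncard_fiber (finite_latticeLevel hi₀ k) hmaps, Nat.cast_sum, eval_finsetSum]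
  refine Finset.sum_congr rfl fun b hb => ?_
  rw [hq, ncard_latticeLevel_fiber hv (hfin.mem_toFinset.1 hb)]

/-- **Ehrhart's theorem**, including the dilation factor `k = 0`. -/
theorem exists_polynomial_eval_eq_ncard_smul_convexHull_inter {V : Set E}
    (hV : V.Finite) (hVΛ : V ⊆ Λ) :
    ∃ q : ℝ[X], ∀ k : ℕ, q.eval (k : ℝ) = ((k : ℝ) • convexHull ℝ V ∩ Λ).ncard := by
  obtain rfl | ⟨x₀, hx₀⟩ := V.eq_empty_or_nonempty
  · exact ⟨0, fun k => by simp⟩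
  obtain ⟨m, e, he⟩ := hV.fin_embedding
  obtain ⟨i₀, hi₀⟩ : x₀ ∈ Set.range e := he ▸ hx₀
  let v (i : Fin m) : E := e i - x₀
  obtain ⟨q, hq⟩ := exists_polynomial_eval_eq_ncard_of_zero_mem_range (v := v) (Λ := Λ) (i₀ := i₀)
    (fun i => sub_mem (hVΛ (he ▸ Set.mem_range_self i)) (hVΛ hx₀)) (sub_eq_zero.2 hi₀)
  have hV_eq : V = x₀ +ᵥ Set.range v := by
    rw [← he, ← Set.image_vadd, ← Set.range_comp]
    exact congrArg Set.range (funext fun i => (add_sub_cancel x₀ (e i)).symm)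
  refine ⟨q, fun k => ?_⟩
  have hkx₀ : (k : ℝ) • x₀ ∈ Λ := by
    rw [Nat.cast_smul_eq_nsmul]
    exact nsmul_mem (hVΛ hx₀) k
  have htranslate : (k : ℝ) • convexHull ℝ V ∩ Λ
      = (k : ℝ) • x₀ +ᵥ ((k : ℝ) • convexHull ℝ (Set.range v) ∩ Λ) := by
    rw [Set.vadd_set_inter, hV_eq, convexHull_vadd, vadd_coe_set hkx₀]
    simp only [← Set.image_vadd, ← Set.image_smul, Set.image_image, vadd_eq_add, smul_add]
  rw [hq, htranslate, Set.ncard_vadd_set]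

end EhrhartPolynomial

section ConstantTerm

lemma eq_of_eval_natCast_eq {R : Type*} [CommRing R] [IsDomain R] [CharZero R] {p q : R[X]}
    (h : ∀ k : ℕ, 0 < k → p.eval (k : R) = q.eval (k : R)) : p = q := by
  refine eq_of_infinite_eval_eq p q <|
    ((Set.Ioi_infinite 0).image Nat.cast_injective.injOn).mono ?_
  rintro _ ⟨k, hk, rfl⟩
  exact h k hk

variable {n : ℕ} {P : Set (Fin n → ℝ)} {L : ℝ[X]}

variable (n) in
/-- The points of `ℝ^n` with integer coordinates. -/
def integerLattice : AddSubgroup (Fin n → ℝ) :=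
  (Submodule.span ℤ (Set.range (Pi.basisFun ℝ (Fin n)))).toAddSubgroup

instance : DiscreteTopology (integerLattice n) :=
  inferInstanceAs (DiscreteTopology (Submodule.span ℤ (Set.range (Pi.basisFun ℝ (Fin n)))))

lemma coe_integerLattice :
    (integerLattice n : Set (Fin n → ℝ)) = Set.range fun (v : Fin n → ℤ) i => (v i : ℝ) := by
  ext x
  refine ((Pi.basisFun ℝ (Fin n)).mem_span_iff_repr_mem ℤ x).trans ?_
  simp [funext_iff, Classical.skolem]

lemma latticePointCount_eq_ncard (S : Set (Fin n → ℝ)) :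
    latticePointCount S = (S ∩ integerLattice n).ncard := by
  have hinj : Function.Injective fun (v : Fin n → ℤ) i => (v i : ℝ) := fun v w h => by
    ext i
    simpa using congrFun h i
  rw [coe_integerLattice, ← Set.image_preimage_eq_inter_range, Set.ncard_image_of_injective _ hinj]
  rfl

theorem IsEhrhartPoly.eval_zero (hP : IsLatticePolytope P) (hne : P.Nonempty)
    (hL : IsEhrhartPoly P L) : L.eval 0 = 1 := by
  obtain ⟨V, rfl⟩ := hP
  obtain ⟨q, hq⟩ := exists_polynomial_eval_eq_ncard_smul_convexHull_inter (Λ := integerLattice n)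
    (V.finite_toSet.image fun v i => (v i : ℝ))
    (by rw [coe_integerLattice]; exact Set.image_subset_range _ _)
  have hLq : L = q := eq_of_eval_natCast_eq fun k hk => by
    rw [hL k hk, hq, latticePointCount_eq_ncard]
  have hzero := hq 0
  rw [Nat.cast_zero, Set.zero_smul_set hne, ← Set.singleton_zero,
    Set.inter_eq_left.2 (Set.singleton_subset_iff.2 (zero_mem (integerLattice n))),
    Set.ncard_singleton, Nat.cast_one] at hzero
  rwa [hLq]

lemma IsEhrhartPoly.nonempty (hL : IsEhrhartPoly P L) (hL0 : L ≠ 0) : P.Nonempty := by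
  contrapose! hL0
  subst hL0
  exact eq_of_eval_natCast_eq fun k hk => by simp [hL k hk, latticePointCount]

end ConstantTerm

theorem ehrhart_coeff_ratio_eq_iff_general {n : ℕ} {a : ℝ} (ha : a ≠ 0) {P : Set (Fin n → ℝ)}
    (hP : IsLatticePolytope P) {L : ℝ[X]} (hL : IsEhrhartPoly P L)
    (hroots : ∀ z ∈ (L.map (algebraMap ℝ ℂ)).roots, z.re = -1 / a) {s t : ℕ} (hst : s < t)
    (ht : t ≤ L.natDegree) (hne : ¬(s = L.natDegree - 1 ∧ t = L.natDegree)) :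
    L.coeff t / L.coeff s = a ^ (t - s) * L.natDegree.choose t / L.natDegree.choose s ↔
      ∀ k : ℕ, 0 < k → L.eval (k : ℝ) = (a * k + 1) ^ L.natDegree := by
  have hPne : P.Nonempty := hL.nonempty (ne_zero_of_natDegree_gt (hst.trans_le ht))
  have hL0 : L.coeff 0 = 1 := by rw [coeff_zero_eq_eval_zero, hL.eval_zero hP hPne]
  rw [coeff_div_coeff_eq_iff ha hroots hst ht hne, hL0, C_1, one_mul]
  refine ⟨fun h k _ => ?_, fun h => eq_of_eval_natCast_eq fun k hk => by simpa using h k hk⟩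
  conv_lhs => rw [h]
  simp

theorem ehrhart_coeff_ratio_eq_iff (n : ℕ) (a : ℝ) (ha : 0 < a) (P : Set (Fin n → ℝ))
    (hP : IsLatticePolytope P) (hfull : (interior P).Nonempty)
    (L : Polynomial ℝ) (hL : IsEhrhartPoly P L) (hdeg : L.natDegree = n)
    (hroots : ∀ z ∈ (L.map (algebraMap ℝ ℂ)).roots, z.re = -1 / a)
    (s t : ℕ) (hst : s < t) (htn : t ≤ n) (hne : ¬(s = n - 1 ∧ t = n)) :
    L.coeff t / L.coeff s = a ^ (t - s) * (n.choose t : ℝ) / (n.choose s : ℝ) ↔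
      ∀ k : ℕ, 0 < k → L.eval (k : ℝ) = (a * k + 1) ^ n := by
  rw [← hdeg] at htn hne ⊢
  exact ehrhart_coeff_ratio_eq_iff_general ha.ne' hP hL hroots hst htn hne
end

section
/- Let a > 0 be a real number, n ≥ 2, and let P ⊂ ℝ^n be an n-dimensional lattice polytope such that all n complex roots of its Ehrhart polynomial L_P have real part equal to -1/a. Then #(P ∩ ℤ^n) ≤ ((a+1)^{n-2}(a+2)/a^{n-1}) · vol(P) + (a+1)^{n-2}. -/
open MeasureTheory Polynomial Pointwise

/-!
Write `V` for the volume and `N` for the number of lattice points. If all roots of `L` have real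
part `r`, then for `x > r` the polynomial is `L(x) = V (x - r)^n ∏ (1 + y² / (x - r)²)`, with one
factor for each pair of conjugate roots `r ± iy`. Expanding the product as a polynomial in
`1 / (x - r)²` shows that `(x - r)² (L(x) / (x - r)^n - V)` decreases on `(r, ∞)`. For `r = -1/a`,
comparing its values at `x = 0` and `x = 1` is the claimed inequality, because `L(0) = 1` and
`L(1) = N`.

That `L(0) = 1` has to be proved, since `L` is only known to count at positive integers. If `P` is
the convex hull of the `v i`, `i ∈ ι`, then `∑_{I ⊆ ι} (-1)^|I| #((|ι| - |I|) P ∩ ℤ^n) = 0`: for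
each lattice point `x`, the translated dilates `∑_{i ∈ I} v i + (|ι| - |I|) P` containing `x`
correspond to the nonempty members of a family of compact convex sets whose signed indicator
functions sum to zero, and then the signs of the nonempty members sum to zero as well. For
`deg L < |ι|` the finite difference of order `|ι|` of `L` vanishes, and comparing the two sums
leaves only the term `I = ι`.
-/

-- The left side is a polynomial in `m` with nonnegative coefficients, so it lies below its chord
-- over `[0, 1]`.
theorem multiset_prod_one_add_mul_le {α R : Type*} [CommRing R] [LinearOrder R]
    [IsStrictOrderedRing R] {m : R} (hm₀ : 0 ≤ m) (hm₁ : m ≤ 1) {f : α → R} (hf : ∀ y, 0 ≤ f y)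
    (ys : Multiset α) :
    (ys.map fun y => 1 + m * f y).prod ≤ 1 + m * ((ys.map fun y => 1 + f y).prod - 1) := by
  induction ys using Multiset.induction_on with
  | empty => simp
  | cons y ys ih =>
    simp only [Multiset.map_cons, Multiset.prod_cons]
    have one_le_prod : 1 ≤ (ys.map fun y => 1 + f y).prod :=
      Multiset.prod_induction (1 ≤ ·) _ (fun _ _ => one_le_mul_of_one_le_of_one_le) le_rfl
        (by simpa using fun y _ => hf y)
    generalize (ys.map fun y => 1 + f y).prod = Q at *
    calc (1 + m * f y) * (ys.map fun y => 1 + m * f y).prod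
      _ ≤ (1 + m * f y) * (1 + m * (Q - 1)) := by
          have := mul_nonneg hm₀ (hf y)
          gcongr
      _ = 1 + m * ((1 + f y) * Q - 1) - m * (1 - m) * f y * (Q - 1) := by ring
      _ ≤ 1 + m * ((1 + f y) * Q - 1) := sub_le_self _ <|
          mul_nonneg (mul_nonneg (mul_nonneg hm₀ (sub_nonneg.2 hm₁)) (hf y))
            (sub_nonneg.2 one_le_prod)

theorem linear_or_quadratic_dvd_of_roots_re_eq {p : ℝ[X]} {r : ℝ} (hp : p.natDegree ≠ 0)
    (hr : ∀ z ∈ p.aroots ℂ, z.re = r) :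
    X - C r ∣ p ∨ ∃ y : ℝ, (X - C r) ^ 2 + C (y ^ 2) ∣ p := by
  have hp₀ : p ≠ 0 := by
    rintro rfl
    exact hp natDegree_zero
  obtain ⟨z, hz⟩ := IsAlgClosed.exists_aeval_eq_zero ℂ p fun h =>
    hp (natDegree_eq_of_degree_eq_some h)
  have hzr : z.re = r := hr z (mem_aroots.2 ⟨hp₀, hz⟩)
  rcases eq_or_ne z.im 0 with him | him
  · have hz_real : z = algebraMap ℝ ℂ r := Complex.ext hzr him
    rw [hz_real, aeval_algebraMap_eq_zero_iff, coe_aeval_eq_eval] at hz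
    exact .inl (dvd_iff_isRoot.2 hz)
  · refine .inr ⟨z.im, ?_⟩
    convert quadratic_dvd_of_aeval_eq_zero_im_ne_zero p hz him using 1
    rw [← Complex.normSq_eq_norm_sq, Complex.normSq_apply, hzr]
    simp only [map_add, map_mul, map_pow, map_ofNat]
    ring

theorem exists_eval_eq_of_roots_re_eq {r : ℝ} (p : ℝ[X]) (hr : ∀ z ∈ p.aroots ℂ, z.re = r) :
    ∃ ys : Multiset ℝ, ∀ x ≠ r, p.eval x =
      p.leadingCoeff * (x - r) ^ p.natDegree * (ys.map fun y => 1 + (y / (x - r)) ^ 2).prod := by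
  induction hd : p.natDegree using Nat.strong_induction_on generalizing p with
  | _ d ih =>
  rcases eq_or_ne d 0 with rfl | hd₀
  · rw [eq_C_of_natDegree_eq_zero hd]
    exact ⟨0, by simp⟩
  have hp : p ≠ 0 := by
    rintro rfl
    exact hd₀ (hd ▸ natDegree_zero)
  rcases linear_or_quadratic_dvd_of_roots_re_eq (hd ▸ hd₀) hr with ⟨q, rfl⟩ | ⟨y, q, rfl⟩
  · have hdeg : d = 1 + q.natDegree := by
      rw [← hd, natDegree_mul (left_ne_zero_of_mul hp) (right_ne_zero_of_mul hp),
        natDegree_X_sub_C]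
    obtain ⟨ys, hys⟩ := ih q.natDegree (by omega) q
      (fun z hz => hr z (by simp [aroots_mul hp, hz])) rfl
    refine ⟨ys, fun x hx => ?_⟩
    rw [eval_mul, hys x hx, leadingCoeff_mul, leadingCoeff_X_sub_C, eval_sub, eval_X, eval_C, hdeg]
    ring
  · set g : ℝ[X] := (X - C r) ^ 2 + C (y ^ 2) with hg
    have hg_deg : g.natDegree = 2 := by rw [hg]; compute_degree!
    have hg_monic : g.Monic := by rw [hg]; monicity!
    have hdeg : d = 2 + q.natDegree := by
      rw [← hd, natDegree_mul (left_ne_zero_of_mul hp) (right_ne_zero_of_mul hp), hg_deg]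
    obtain ⟨ys, hys⟩ := ih q.natDegree (by omega) q
      (fun z hz => hr z (by rw [aroots_mul hp]; simp [hz])) rfl
    refine ⟨y ::ₘ ys, fun x hx => ?_⟩
    have hg_eval : g.eval x = (x - r) ^ 2 * (1 + (y / (x - r)) ^ 2) := by
      have := sub_ne_zero.2 hx
      simp only [hg, eval_add, eval_pow, eval_sub, eval_X, eval_C]
      field_simp
    rw [eval_mul, hys x hx, leadingCoeff_mul, hg_monic.leadingCoeff, hg_eval, hdeg,
      Multiset.map_cons, Multiset.prod_cons]
    ring

theorem antitoneOn_sq_mul_eval_div_sub_of_roots_re_eq {p : ℝ[X]} {r : ℝ}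
    (hr : ∀ z ∈ p.aroots ℂ, z.re = r) (hp : 0 ≤ p.leadingCoeff) :
    AntitoneOn
      (fun x => (x - r) ^ 2 * (p.eval x / (x - r) ^ p.natDegree - p.leadingCoeff))
      (Set.Ioi r) := by
  intro s (hs : r < s) t (ht : r < t) hst
  have hs₀ : 0 < s - r := sub_pos.2 hs
  have ht₀ : 0 < t - r := sub_pos.2 ht
  obtain ⟨ys, hys⟩ := exists_eval_eq_of_roots_re_eq p hr
  have div_pow_eq {x : ℝ} (hx : 0 < x - r) : p.eval x / (x - r) ^ p.natDegree =
      p.leadingCoeff * (ys.map fun y => 1 + (y / (x - r)) ^ 2).prod := by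
    rw [hys x (sub_pos.1 hx).ne']
    field_simp
  have prod_le := multiset_prod_one_add_mul_le (m := ((s - r) / (t - r)) ^ 2) (by positivity)
    (pow_le_one₀ (by positivity) ((div_le_one ht₀).2 (by linarith)))
    (fun y : ℝ => sq_nonneg (y / (s - r))) ys
  have rescale (y : ℝ) :
      ((s - r) / (t - r)) ^ 2 * (y / (s - r)) ^ 2 = (y / (t - r)) ^ 2 := by
    field_simp
  simp only [rescale] at prod_le
  simp only [div_pow_eq hs₀, div_pow_eq ht₀]
  generalize (ys.map fun y => 1 + (y / (s - r)) ^ 2).prod = S at *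
  calc (t - r) ^ 2 * (p.leadingCoeff * (ys.map fun y => 1 + (y / (t - r)) ^ 2).prod
        - p.leadingCoeff)
    _ ≤ (t - r) ^ 2 * (p.leadingCoeff * (1 + ((s - r) / (t - r)) ^ 2 * (S - 1))
        - p.leadingCoeff) := by gcongr
    _ = (s - r) ^ 2 * (p.leadingCoeff * S - p.leadingCoeff) := by
      field_simp
      ring

section EulerRelation

open Filter Topology

theorem eventually_nhdsGT_mem_or_isGreatest_iff {S : Set ℝ} (hclosed : IsClosed S)
    (hconn : S.OrdConnected) (t : ℝ) : ∀ᶠ s in 𝓝[>] t, (s ∈ S ∨ IsGreatest S t) ↔ t ∈ S := by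
  by_cases ht : t ∈ S
  swap
  · filter_upwards [nhdsWithin_le_nhds (hclosed.isOpen_compl.mem_nhds ht)] with s hs
    exact iff_of_false (not_or_intro hs fun h => ht h.1) ht
  by_cases hmax : IsGreatest S t
  · exact .of_forall fun _ => iff_of_true (.inr hmax) ht
  obtain ⟨u, hu, htu⟩ : ∃ u ∈ S, t < u := by
    simpa [IsGreatest, ht, mem_upperBounds] using hmax
  filter_upwards [Ioo_mem_nhdsGT htu] with s hs
  exact iff_of_true (.inl (hconn.out ht hu ⟨hs.1.le, hs.2.le⟩)) ht

variable {A J : Type*} [AddCommGroup A] [Fintype J] {α : J → A}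

open scoped Classical in
theorem sum_isGreatest_eq_zero {S : J → Set ℝ} (hclosed : ∀ j, IsClosed (S j))
    (hconn : ∀ j, (S j).OrdConnected) (h : ∀ t, ∑ j with t ∈ S j, α j = 0) (t : ℝ) :
    ∑ j with IsGreatest (S j) t, α j = 0 := by
  -- Just to the right of `t`, exactly the sets with greatest element `t` have been left.
  obtain ⟨s, hs, hts⟩ := ((eventually_all.2 fun j =>
    eventually_nhdsGT_mem_or_isGreatest_iff (hclosed j) (hconn j) t).and
      (self_mem_nhdsWithin (s := Set.Ioi t))).exists
  have hdisj : Disjoint (Finset.univ.filter fun j => s ∈ S j)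
      (Finset.univ.filter fun j => IsGreatest (S j) t) :=
    Finset.disjoint_filter.2 fun j _ hj hmax => (hmax.2 hj).not_gt hts
  have hunion := h t
  simpa only [← hs, Finset.filter_or, Finset.sum_union hdisj, h s, zero_add] using hunion

open scoped Classical in
theorem sum_nonempty_eq_zero_of_ordConnected {S : J → Set ℝ} (hcpt : ∀ j, IsCompact (S j))
    (hconn : ∀ j, (S j).OrdConnected) (h : ∀ t, ∑ j with t ∈ S j, α j = 0) :
    ∑ j with (S j).Nonempty, α j = 0 := by
  rw [← Finset.sum_fiberwise_of_maps_to (t := Finset.univ.image fun j => sSup (S j))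
    (fun j _ => Finset.mem_image_of_mem _ (Finset.mem_univ j))]
  refine Finset.sum_eq_zero fun t _ => ?_
  rw [Finset.filter_filter, ← sum_isGreatest_eq_zero (fun j => (hcpt j).isClosed) hconn h t]
  refine Finset.sum_congr (Finset.filter_congr fun j _ => ⟨?_, ?_⟩) fun _ _ => rfl
  · rintro ⟨hne, rfl⟩
    exact (hcpt j).isGreatest_sSup hne
  · exact fun hmax => ⟨hmax.nonempty, hmax.csSup_eq⟩

variable {E : Type*} [AddCommGroup E] [Module ℝ E] [TopologicalSpace E]

open scoped Classical in
theorem sum_nonempty_eq_zero_of_separating {ι : Type*} (f : ι → E →L[ℝ] ℝ) (s : Finset ι)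
    {K : J → Set E} (hsep : ∀ᵉ (x ∈ ⋃ j, K j) (y ∈ ⋃ j, K j), (∀ i ∈ s, f i x = f i y) → x = y)
    (hcpt : ∀ j, IsCompact (K j)) (hconv : ∀ j, Convex ℝ (K j))
    (h : ∀ x, ∑ j with x ∈ K j, α j = 0) : ∑ j with (K j).Nonempty, α j = 0 := by
  induction s using Finset.induction_on generalizing K with
  | empty =>
    have hsub : (⋃ j, K j).Subsingleton := fun x hx y hy => hsep x hx y hy (by simp)
    rcases hsub.eq_empty_or_singleton with hempty | ⟨x, hx⟩
    · simp_all
    · rw [← h x]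
      refine Finset.sum_congr (Finset.filter_congr fun j _ => ⟨?_, fun hxj => ⟨x, hxj⟩⟩)
        fun _ _ => rfl
      rintro ⟨y, hy⟩
      have : y ∈ ({x} : Set E) := hx ▸ Set.mem_iUnion_of_mem j hy
      rwa [Set.mem_singleton_iff.1 this] at hy
  | insert i s _ ih =>
    -- By induction the slices over each `t` cancel, which is the hypothesis for the images in `ℝ`.
    have hslice (t : ℝ) : ∑ j with (K j ∩ f i ⁻¹' {t}).Nonempty, α j = 0 := by
      refine ih ?_ (fun j => (hcpt j).inter_right (isClosed_singleton.preimage (f i).continuous))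
        (fun j => (hconv j).inter ((convex_singleton t).linear_preimage (f i).toLinearMap)) ?_
      · simp only [← Set.iUnion_inter]
        rintro x ⟨hx, rfl⟩ y ⟨hy, hyx⟩ hxy
        exact hsep x hx y hy (Finset.forall_mem_insert .. |>.2 ⟨hyx.symm, hxy⟩)
      · intro x
        by_cases hx : f i x = t
        · simpa [hx] using h x
        · simp [hx]
    have himage := sum_nonempty_eq_zero_of_ordConnected (S := fun j => f i '' K j) (α := α)
      (fun j => (hcpt j).image (f i).continuous)
      (fun j => ((hconv j).linear_image (f i).toLinearMap).ordConnected)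
      (fun t => by simpa only [Set.inter_nonempty, Set.mem_preimage, Set.mem_singleton_iff,
        Set.mem_image] using hslice t)
    simpa only [Set.image_nonempty] using himage

-- In other words, assigning `1` to every nonempty compact convex set extends to a linear functional
-- on combinations of indicator functions of such sets: the Euler characteristic.
open scoped Classical in
theorem sum_nonempty_eq_zero_of_convex [IsTopologicalAddGroup E] [ContinuousSMul ℝ E] [T2Space E]
    [FiniteDimensional ℝ E] {K : J → Set E} (hcpt : ∀ j, IsCompact (K j))
    (hconv : ∀ j, Convex ℝ (K j)) (h : ∀ x, ∑ j with x ∈ K j, α j = 0) :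
    ∑ j with (K j).Nonempty, α j = 0 := by
  let b := Module.finBasis ℝ E
  refine sum_nonempty_eq_zero_of_separating (fun i => (b.coord i).toContinuousLinearMap)
    Finset.univ (fun x _ y _ hxy => b.ext_elem fun i => ?_) hcpt hconv h
  simpa using hxy i

end EulerRelation

section WeightPolytope

variable {ι E : Type*} [Fintype ι] [AddCommGroup E] [Module ℝ E] (v : ι → E) (x : E)

theorem mem_smul_convexHull_range_iff [Nonempty ι] {v : ι → E} {x : E} {c : ℝ} (hc : 0 ≤ c) :
    x ∈ c • convexHull ℝ (Set.range v) ↔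
      ∃ l : ι → ℝ, 0 ≤ l ∧ ∑ i, l i = c ∧ ∑ i, l i • v i = x := by
  classical
  constructor
  · rintro ⟨y, hy, rfl⟩
    have hull_eq : convexHull ℝ (Set.range v) =
        Fintype.linearCombination ℝ v '' stdSimplex ℝ ι := by
      rw [← convexHull_rangle_single_eq_stdSimplex, LinearMap.image_convexHull, ← Set.range_comp]
      congr 2
      ext i
      simp [Fintype.linearCombination_apply_single]
    obtain ⟨w, ⟨hw₀, hw₁⟩, rfl⟩ := hull_eq ▸ hy
    refine ⟨c • w, smul_nonneg hc hw₀, ?_, ?_⟩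
    · simp [← Finset.mul_sum, hw₁]
    · simp [Fintype.linearCombination_apply, Finset.smul_sum, mul_smul]
  · rintro ⟨l, hl₀, rfl, rfl⟩
    rcases hc.eq_or_lt with hc | hc
    · have hl : l = 0 := (Fintype.sum_eq_zero_iff_of_nonneg hl₀).1 hc.symm
      simp [hl, Set.zero_smul_set (Set.range_nonempty v).convexHull]
    · rw [Set.mem_smul_set_iff_inv_smul_mem₀ hc.ne']
      exact Finset.univ.centerMass_mem_convexHull (fun i _ => hl₀ i) hc fun i _ => ⟨i, rfl⟩

/-- The polytope of ways to write `x` as a combination of the `v i` with weights of total mass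
`|ι|`, all nonnegative and those indexed by `I` at least `1`. Subtracting `1` from the weights in
`I` turns nonemptiness into membership of `x` in the dilate of `convexHull ℝ (range v)` by
`|ι| - |I|`, translated by `∑ i ∈ I, v i`. -/
def weightPolytope (I : Finset ι) : Set (ι → ℝ) :=
  {l | (I : Set ι).indicator 1 ≤ l ∧ ∑ i, l i = Fintype.card ι ∧ ∑ i, l i • v i = x}

theorem weightPolytope_eq_inter (I : Finset ι) : weightPolytope v x I =
    Set.Ici ((I : Set ι).indicator 1) ∩
      (Fintype.linearCombination ℝ (1 : ι → ℝ) ⁻¹' {(Fintype.card ι : ℝ)} ∩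
        Fintype.linearCombination ℝ v ⁻¹' {x}) := by
  ext l
  simp [weightPolytope, Fintype.linearCombination_apply]

theorem convex_weightPolytope (I : Finset ι) : Convex ℝ (weightPolytope v x I) := by
  rw [weightPolytope_eq_inter]
  exact (convex_Ici _).inter <| ((convex_singleton _).linear_preimage _).inter
    ((convex_singleton x).linear_preimage _)

variable {v x} in
theorem nonneg_of_mem_weightPolytope {I : Finset ι} {l : ι → ℝ} (hl : l ∈ weightPolytope v x I) :
    0 ≤ l :=
  le_trans (Set.indicator_nonneg fun _ _ => zero_le_one) hl.1

theorem isCompact_weightPolytope [TopologicalSpace E] [IsTopologicalAddGroup E]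
    [ContinuousSMul ℝ E] [T1Space E] (I : Finset ι) : IsCompact (weightPolytope v x I) := by
  have hclosed : IsClosed (weightPolytope v x I) := by
    rw [weightPolytope_eq_inter]
    exact isClosed_Ici.inter <|
      (isClosed_singleton.preimage (LinearMap.continuous_of_finiteDimensional _)).inter
        (isClosed_singleton.preimage (LinearMap.continuous_of_finiteDimensional _))
  refine (isCompact_Icc (a := 0) (b := fun _ => (Fintype.card ι : ℝ))).of_isClosed_subset
    hclosed fun l hl => ⟨nonneg_of_mem_weightPolytope hl, fun i => ?_⟩
  rw [← hl.2.1]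
  exact Finset.single_le_sum (fun j _ => nonneg_of_mem_weightPolytope hl j) (Finset.mem_univ i)

variable {v x}

theorem weightPolytope_nonempty_iff [Nonempty ι] {I : Finset ι} :
    (weightPolytope v x I).Nonempty ↔
      x - ∑ i ∈ I, v i ∈ ((Fintype.card ι - I.card : ℕ) : ℝ) • convexHull ℝ (Set.range v) := by
  rw [mem_smul_convexHull_range_iff (Nat.cast_nonneg _), Nat.cast_sub I.card_le_univ]
  have sum_ind : ∑ i, (I : Set ι).indicator (1 : ι → ℝ) i = I.card := by
    classical simp [Set.indicator_apply]
  have sum_ind_smul : ∑ i, (I : Set ι).indicator (1 : ι → ℝ) i • v i = ∑ i ∈ I, v i := by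
    classical simp [Set.indicator_apply, ite_smul]
  constructor
  · rintro ⟨l, hI, hmass, hx⟩
    refine ⟨l - (I : Set ι).indicator 1, sub_nonneg.2 hI, ?_, ?_⟩
    · simp only [Pi.sub_apply, Finset.sum_sub_distrib, hmass, sum_ind]
    · simp only [Pi.sub_apply, sub_smul, Finset.sum_sub_distrib, hx, sum_ind_smul]
  · rintro ⟨l, hl, hmass, hx⟩
    refine ⟨l + (I : Set ι).indicator 1, le_add_of_nonneg_left hl, ?_, ?_⟩
    · simp only [Pi.add_apply, Finset.sum_add_distrib, hmass, sum_ind, sub_add_cancel]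
    · simp only [Pi.add_apply, add_smul, Finset.sum_add_distrib, hx, sum_ind_smul, sub_add_cancel]

open scoped Classical in
theorem sum_mem_weightPolytope_neg_one_pow_card [Nonempty ι] (l : ι → ℝ) :
    ∑ I : Finset ι with l ∈ weightPolytope v x I, (-1 : ℤ) ^ I.card = 0 := by
  by_cases hl : 0 ≤ l ∧ ∑ i, l i = Fintype.card ι ∧ ∑ i, l i • v i = x
  · obtain ⟨hl₀, hmass, hx⟩ := hl
    have hfilter : (Finset.univ.filter fun I => l ∈ weightPolytope v x I) =
        (Finset.univ.filter fun i => 1 ≤ l i).powerset := by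
      ext I
      simp only [Finset.mem_filter_univ, Finset.mem_powerset, Finset.subset_iff]
      refine ⟨fun hI i hi => by simpa [hi] using hI.1 i, fun hI => ⟨?_, hmass, hx⟩⟩
      exact Set.indicator_le' (fun i hi => hI hi) fun i _ => hl₀ i
    rw [hfilter]
    refine Finset.sum_powerset_neg_one_pow_card_of_nonempty ?_
    obtain ⟨i, -, hi⟩ := Finset.exists_le_of_sum_le (f := fun _ => (1 : ℝ)) (g := l)
      Finset.univ_nonempty (by simp [hmass])
    exact ⟨i, by simpa using hi⟩
  · refine Finset.sum_eq_zero fun I hI => absurd ?_ hl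
    have hI := (Finset.mem_filter.1 hI).2
    exact ⟨nonneg_of_mem_weightPolytope hI, hI.2⟩

open scoped Classical in
theorem sum_sub_mem_smul_convexHull_neg_one_pow_card [TopologicalSpace E]
    [IsTopologicalAddGroup E] [ContinuousSMul ℝ E] [T1Space E] [Nonempty ι] (v : ι → E) (x : E) :
    ∑ I : Finset ι with
      x - ∑ i ∈ I, v i ∈ ((Fintype.card ι - I.card : ℕ) : ℝ) • convexHull ℝ (Set.range v),
      (-1 : ℤ) ^ I.card = 0 := by
  simpa only [weightPolytope_nonempty_iff] using
    sum_nonempty_eq_zero_of_convex (isCompact_weightPolytope v x) (convex_weightPolytope v x)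
      sum_mem_weightPolytope_neg_one_pow_card

end WeightPolytope

open scoped Classical in
theorem sum_mul_ncard_eq_zero {R J X : Type*} [NonAssocSemiring R] [Fintype J] {α : J → R}
    {T : J → Set X} (hfin : ∀ j, (T j).Finite) (h : ∀ x, ∑ j with x ∈ T j, α j = 0) :
    ∑ j, α j * (T j).ncard = 0 := by
  let B : Finset X := Finset.univ.biUnion fun j => (hfin j).toFinset
  have ncard_eq (j : J) : (T j).ncard = (B.filter (· ∈ T j)).card := by
    rw [← Set.ncard_coe_finset]
    congr 1
    ext x
    simpa [B] using fun hx => ⟨j, hx⟩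
  calc ∑ j, α j * (T j).ncard
    _ = ∑ j, ∑ x ∈ B, if x ∈ T j then α j else 0 := by
      simp only [ncard_eq, ← Finset.sum_filter, Finset.sum_const, nsmul_eq_mul']
    _ = ∑ x ∈ B, ∑ j with x ∈ T j, α j := by
      rw [Finset.sum_comm]
      simp only [Finset.sum_filter]
    _ = 0 := Finset.sum_eq_zero fun x _ => h x

theorem finite_setOf_intCast_mem {κ : Type*} [Finite κ] {S : Set (κ → ℝ)} (hS : IsCompact S) :
    {v : κ → ℤ | (fun i => (v i : ℝ)) ∈ S}.Finite :=
  ((Topology.IsClosedEmbedding.piMap fun _ : κ => Int.isClosedEmbedding_coe_real).isCompact_preimage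
    hS).finite_of_discrete

theorem sum_neg_one_pow_card_mul_latticePointCount {n : ℕ} {ι : Type*} [Fintype ι] [Nonempty ι]
    (v : ι → Fin n → ℤ) :
    ∑ I : Finset ι, (-1 : ℤ) ^ I.card * latticePointCount
      (((Fintype.card ι - I.card : ℕ) : ℝ) •
        convexHull ℝ (Set.range fun i t => (v i t : ℝ))) = 0 := by
  classical
  let Q (I : Finset ι) : Set (Fin n → ℝ) :=
    ((Fintype.card ι - I.card : ℕ) : ℝ) • convexHull ℝ (Set.range fun i t => (v i t : ℝ))
  have hfin (I : Finset ι) : {u : Fin n → ℤ | (fun t => (u t : ℝ)) ∈ Q I}.Finite :=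
    finite_setOf_intCast_mem (((Set.finite_range _).isCompact_convexHull ℝ).smul _)
  let translate (I : Finset ι) : (Fin n → ℤ) ≃ (Fin n → ℤ) := Equiv.subRight (∑ i ∈ I, v i)
  have hcount (I : Finset ι) : latticePointCount (Q I) =
      (translate I ⁻¹' {u | (fun t => (u t : ℝ)) ∈ Q I}).ncard :=
    (Set.ncard_preimage_of_injective_subset_range (translate I).injective (by simp)).symm
  change ∑ I, (-1 : ℤ) ^ I.card * latticePointCount (Q I) = 0
  simp only [hcount]
  refine sum_mul_ncard_eq_zero (fun I => (hfin I).preimage (translate I).injective.injOn)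
    fun x => ?_
  rw [← sum_sub_mem_smul_convexHull_neg_one_pow_card (fun i t => (v i t : ℝ)) fun t => (x t : ℝ)]
  refine Finset.sum_congr (Finset.filter_congr fun I _ => ?_) fun _ _ => rfl
  have hcast : (fun t => (translate I x t : ℝ)) =
      (fun t => (x t : ℝ)) - ∑ i ∈ I, fun t => (v i t : ℝ) := by
    ext t
    simp [translate]
  rw [Set.mem_preimage, Set.mem_ofPred_eq, hcast]

theorem sum_neg_one_pow_card_mul_eval_eq_zero {R ι : Type*} [CommRing R] [Fintype ι]
    {L : R[X]} (hL : L.natDegree < Fintype.card ι) :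
    ∑ I : Finset ι, (-1) ^ I.card * L.eval ((Fintype.card ι - I.card : ℕ) : R) = 0 := by
  have hdiff := congrFun (fwdDiff_iter_eq_zero_of_degree_lt hL) 0
  rw [fwdDiff_iter_eq_sum_shift, ← Finset.sum_flip] at hdiff
  rw [← Finset.powerset_univ, Finset.sum_powerset_apply_card
    fun j => (-1) ^ j * L.eval ((Fintype.card ι - j : ℕ) : R), Finset.card_univ]
  refine Eq.trans (Finset.sum_congr rfl fun j hj => ?_) hdiff
  have hj : j ≤ Fintype.card ι := Finset.mem_range_succ_iff.1 hj
  rw [Nat.sub_sub_self hj, Nat.choose_symm hj]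
  simp only [nsmul_eq_mul, zsmul_eq_mul, zero_add, mul_one]
  push_cast
  ring

theorem latticePointCount_zero {n : ℕ} : latticePointCount (0 : Set (Fin n → ℝ)) = 1 := by
  have hset : {v : Fin n → ℤ | (fun i => (v i : ℝ)) ∈ (0 : Set (Fin n → ℝ))} = {0} := by
    ext v
    simp [funext_iff]
  rw [latticePointCount, hset, Set.ncard_singleton]

theorem eval_zero_eq_one_of_natDegree_lt_card {n : ℕ} {ι : Type*} [Fintype ι] [Nonempty ι]
    {v : ι → Fin n → ℤ} {L : ℝ[X]}
    (hL : IsEhrhartPoly (convexHull ℝ (Set.range fun i t => (v i t : ℝ))) L)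
    (hdeg : L.natDegree < Fintype.card ι) : L.eval 0 = 1 := by
  set P := convexHull ℝ (Set.range fun i t => (v i t : ℝ))
  have hcount : ∑ I : Finset ι, (-1 : ℝ) ^ I.card *
      latticePointCount (((Fintype.card ι - I.card : ℕ) : ℝ) • P) = 0 := by
    exact_mod_cast sum_neg_one_pow_card_mul_latticePointCount v
  have hcount_zero : latticePointCount ((0 : ℝ) • P) = 1 := by
    rw [Set.zero_smul_set (Set.range_nonempty _).convexHull, latticePointCount_zero]
  have hterm (I : Finset ι) (hI : I ≠ Finset.univ) :
      L.eval ((Fintype.card ι - I.card : ℕ) : ℝ) =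
        latticePointCount (((Fintype.card ι - I.card : ℕ) : ℝ) • P) :=
    hL _ (Nat.sub_pos_of_lt (Finset.card_lt_iff_ne_univ I |>.2 hI))
  have huniv : (-1 : ℝ) ^ Fintype.card ι * (L.eval 0 - 1) = 0 :=
    calc (-1 : ℝ) ^ Fintype.card ι * (L.eval 0 - 1)
      _ = ∑ I : Finset ι, (-1 : ℝ) ^ I.card * (L.eval ((Fintype.card ι - I.card : ℕ) : ℝ) -
            latticePointCount (((Fintype.card ι - I.card : ℕ) : ℝ) • P)) := by
        rw [Fintype.sum_eq_single Finset.univ fun I hI => by rw [hterm I hI, sub_self, mul_zero],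
          Finset.card_univ, Nat.sub_self, Nat.cast_zero, hcount_zero, Nat.cast_one]
      _ = 0 := by
        simp only [mul_sub, Finset.sum_sub_distrib, hcount,
          sum_neg_one_pow_card_mul_eval_eq_zero hdeg, sub_zero]
  exact sub_eq_zero.1 ((mul_eq_zero_iff_left (by simp)).1 huniv)

theorem eval_zero_eq_one_of_isEhrhartPoly {n : ℕ} {P : Set (Fin n → ℝ)} {L : ℝ[X]}
    (hP : IsLatticePolytope P) (hne : P.Nonempty) (hL : IsEhrhartPoly P L) : L.eval 0 = 1 := by
  obtain ⟨V, rfl⟩ := hP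
  obtain ⟨_, v₀, hv₀, rfl⟩ := convexHull_nonempty_iff.1 hne
  have : Nonempty V := ⟨v₀, hv₀⟩
  -- Each vertex is repeated so that the number of generators exceeds the degree of `L`.
  let v : V × Fin (L.natDegree + 1) → Fin n → ℤ := fun i => i.1
  have hrange : (fun u i => (u i : ℝ)) '' (V : Set (Fin n → ℤ)) =
      Set.range fun i t => (v i t : ℝ) := by
    ext y
    simp [v]
  have hcard : L.natDegree < Fintype.card (V × Fin (L.natDegree + 1)) := by
    have := Finset.card_pos.2 ⟨v₀, hv₀⟩
    simp only [Fintype.card_prod, Fintype.card_coe, Fintype.card_fin]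
    nlinarith
  rw [hrange] at hL
  exact eval_zero_eq_one_of_natDegree_lt_card hL hcard

theorem tendsto_eval_div_pow_atTop {p : ℝ[X]} {n : ℕ} (hp : p.natDegree ≤ n) :
    Filter.Tendsto (fun x => p.eval x / x ^ n) Filter.atTop (nhds (p.coeff n)) := by
  rcases hp.lt_or_eq with hlt | rfl
  · rw [coeff_eq_zero_of_natDegree_lt hlt]
    simpa using p.div_tendsto_atTop_zero_of_degree_lt (X ^ n)
      (by rw [degree_X_pow]; exact degree_le_natDegree.trans_lt (by exact_mod_cast hlt))
  · rcases eq_or_ne p 0 with rfl | hp₀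
    · simp
    simpa using p.div_tendsto_atTop_leadingCoeff_div_of_degree_eq (X ^ p.natDegree)
      (by rw [degree_X_pow, degree_eq_natDegree hp₀])

theorem coe_span_range_basisFun_eq_range_intCast {κ : Type*} [Finite κ] :
    (Submodule.span ℤ (Set.range (Pi.basisFun ℝ κ)) : Set (κ → ℝ)) =
      Set.range fun (v : κ → ℤ) i => (v i : ℝ) := by
  ext y
  simp only [SetLike.mem_coe, (Pi.basisFun ℝ κ).mem_span_iff_repr_mem ℤ, Pi.basisFun_repr,
    Set.mem_range, algebraMap_int_eq, Int.coe_castRingHom, Classical.skolem, funext_iff]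

theorem latticePointCount_smul {n : ℕ} {c : ℝ} (hc : c ≠ 0) (P : Set (Fin n → ℝ)) :
    latticePointCount (c • P) = Nat.card
      ↑(P ∩ c⁻¹ • (Submodule.span ℤ (Set.range (Pi.basisFun ℝ (Fin n))) : Set (Fin n → ℝ))) := by
  let f (v : Fin n → ℤ) : Fin n → ℝ := c⁻¹ • fun i => (v i : ℝ)
  have hf : f.Injective := (smul_right_injective _ (inv_ne_zero hc)).comp
    fun v w h => funext fun i => Int.cast_injective (congrFun h i)
  have hpre : {v : Fin n → ℤ | (fun i => (v i : ℝ)) ∈ c • P} = f ⁻¹' P := by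
    ext v
    exact Set.mem_smul_set_iff_inv_smul_mem₀ hc ..
  have hrange : c⁻¹ • Set.range (fun (v : Fin n → ℤ) i => (v i : ℝ)) = Set.range f := by
    rw [← Set.image_smul, ← Set.range_comp]
    rfl
  rw [coe_span_range_basisFun_eq_range_intCast, hrange, latticePointCount, hpre,
    ← Set.ncard_image_of_injective _ hf, Set.image_preimage_eq_inter_range, Nat.card_coe_set_eq]

theorem coeff_eq_volume_of_isEhrhartPoly {n : ℕ} {P : Set (Fin n → ℝ)} {L : ℝ[X]}
    (hbdd : Bornology.IsBounded P) (hmeas : MeasurableSet P) (hfrontier : volume (frontier P) = 0)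
    (hL : IsEhrhartPoly P L) (hdeg : L.natDegree ≤ n) : L.coeff n = (volume P).toReal := by
  have hpoly := (tendsto_eval_div_pow_atTop hdeg).comp tendsto_natCast_atTop_atTop
  refine tendsto_nhds_unique (hpoly.congr' ?_)
    (tendsto_card_div_pow_atTop_volume P hbdd hmeas hfrontier)
  filter_upwards [Filter.eventually_gt_atTop 0] with k hk
  rw [Function.comp_apply, hL k hk, latticePointCount_smul (Nat.cast_ne_zero.2 hk.ne'),
    Fintype.card_fin]

theorem le_of_sq_mul_div_pow_sub_le {a V N : ℝ} (ha : 0 < a) (m : ℕ)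
    (h : ((a + 1) / a) ^ 2 * (N / ((a + 1) / a) ^ (m + 2) - V) ≤
      (1 / a) ^ 2 * (1 / (1 / a) ^ (m + 2) - V)) :
    N ≤ (a + 1) ^ m * (a + 2) / a ^ (m + 1) * V + (a + 1) ^ m := by
  have cancel_sq {b : ℝ} (hb : b ≠ 0) (y : ℝ) :
      b ^ 2 * (y / b ^ (m + 2) - V) = y / b ^ m - b ^ 2 * V := by
    field_simp
    ring
  rw [cancel_sq (by positivity), cancel_sq (by positivity), sub_le_iff_le_add,
    div_le_iff₀ (by positivity)] at h
  refine h.trans_eq ?_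
  simp only [div_pow]
  field_simp
  ring

theorem lattice_points_le_of_roots_real_part (n : ℕ) (hn : 2 ≤ n) (a : ℝ) (ha : 0 < a)
    (P : Set (Fin n → ℝ))
    (hP : IsLatticePolytope P) (hfull : (interior P).Nonempty)
    (L : Polynomial ℝ) (hL : IsEhrhartPoly P L) (hdeg : L.natDegree = n)
    (hroots : ∀ z ∈ (L.map (algebraMap ℝ ℂ)).roots, z.re = -1 / a) :
    (latticePointCount P : ℝ) ≤
      (a + 1) ^ (n - 2) * (a + 2) / a ^ (n - 1) * (volume P).toReal + (a + 1) ^ (n - 2) := by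
  have hconst : L.eval 0 = 1 := eval_zero_eq_one_of_isEhrhartPoly hP (hfull.mono interior_subset) hL
  have hcount : L.eval 1 = latticePointCount P := by simpa using hL 1 one_pos
  have hlead : L.leadingCoeff = (volume P).toReal := by
    obtain ⟨V, rfl⟩ := hP
    have hcompact := (V.finite_toSet.image fun v i => (v i : ℝ)).isCompact_convexHull ℝ
    rw [leadingCoeff, hdeg]
    exact coeff_eq_volume_of_isEhrhartPoly hcompact.isBounded hcompact.measurableSet
      ((convex_convexHull ℝ _).addHaar_frontier volume) hL hdeg.le
  have hneg : -1 / a < 0 := div_neg_of_neg_of_pos neg_one_lt_zero ha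
  have hanti := antitoneOn_sq_mul_eval_div_sub_of_roots_re_eq hroots
    (hlead ▸ ENNReal.toReal_nonneg) hneg (hneg.trans one_pos) zero_le_one
  obtain ⟨m, rfl⟩ := Nat.exists_eq_add_of_le' hn
  have h₁ : 1 - -1 / a = (a + 1) / a := by field_simp; ring
  have h₀ : 0 - -1 / a = 1 / a := by ring
  simp only [hconst, hcount, hlead, hdeg, h₀, h₁] at hanti
  exact le_of_sq_mul_div_pow_sub_le ha m hanti
end
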